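/- Let n, m, r, s be positive integers with 1 ≤ m < n, gcd(m, n) = 1 and s(n-m) - rn = 1, and let k be a PAC field whose characteristic does not divide mn(n-m). Then every field extension E/k of degree n (automatically separable) can be realized by a trinomial of the form Y^n - t^r·Y^m + t^s: there exists t ∈ k such that Y^n - t^r·Y^m + t^s is irreducible in k[Y] and E is generated over k by one of its roots. -/

import Mathlib

/-!
Write `l = n - m`. The substitution `y = ζ ^ (s - r) * (1 - ζ) ^ r` turns the equation
`ζ ^ m * (1 - ζ) ^ l = t` into `y ^ n - t ^ r * y ^ m + t ^ s = 0`, and `ζ` is recovered from `y` by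
`y ^ l = t ^ r * ζ` (`trinomial_identity`). Up to the sign of `t`, it therefore suffices to find a
generator `ζ` of `E` over `k` with `ζ ^ m * (ζ - 1) ^ l ∈ k` (`exists_root_generator`).

Let `g = X ^ m * (X - 1) ^ l` and let `K` be an algebraic closure of `k`. The Galois group of `g - T`
over `K(T)` is the full symmetric group (`famF_galois_full`):
* It is primitive. Intermediate fields of `K(x) / K(g(x))` correspond, by Lüroth, to decompositions
  of the polynomial `g`, and `g` is indecomposable because the multiplicities `m` and `l` of its two
  roots are coprime (`belyi_indecomposable`, `belyi_no_intermediate`, `famF_preprimitive`).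
* It contains a transposition. The only critical point of `g` outside `{0, 1}` is `m / n`, and it is
  simple, so over its value `t₀` the fibre has one double root and otherwise simple ones. A prime
  over `T - t₀` in the splitting field is ramified, hence has a nontrivial inertia element, and such
  an element can only exchange the two roots that come together
  (`local_analysis`, `exists_inertia_ne_one`).
* A primitive permutation group containing a transposition is the full symmetric group.

To twist by `E`, index the roots `z i` of `g - T` by the embeddings `i` of `E` into a separable
closure of `k`, pick `c ∈ E`, and consider the polynomial `P(T, X)` with roots `∑ i, i c * z (π i)`,
where `π` runs over all permutations of the embeddings. It has coefficients in `k[T]`, since it is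
invariant under the Galois group of `k`, which permutes the `i c`, and symmetric in the `z i`
(`exists_resolvent`). For a suitable `c` these roots are distinct, and `P` is then irreducible
over `K`, as the group of `g - T` over `K(T)` is the full symmetric group (`exists_good_resolvent`).
The PAC property gives `t, x ∈ k` with `P(t, x) = 0` and `P(t, X)` separable. Rationality of the
simple root `x = ∑ i, i c * y i` forces the Galois group of `k` to permute the roots `y i` of `g - t`
exactly as it permutes the embeddings `i` (`galois_compat`), so by Galois theory `y i` is
the image under `i` of a generator of `E` (`generator_of_compat`).
-/

open Polynomial

/-- A field `k` is PAC (pseudo algebraically closed): every polynomial in two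
variables over `k` that remains irreducible over an algebraic closure of `k`
has infinitely many zeros in `k × k`. -/
def IsPAC (k : Type*) [Field k] : Prop :=
  ∀ f : MvPolynomial (Fin 2) k,
    Irreducible (MvPolynomial.map (algebraMap k (AlgebraicClosure k)) f) →
    {x : k × k | MvPolynomial.eval ![x.1, x.2] f = 0}.Infinite

/-! ### The polynomial `X ^ m * (X - 1) ^ l` and its indecomposability -/

/-- The monic polynomial `X ^ m * (X - 1) ^ l`. Besides `0` and `1` its only critical point is
`m / (m + l)`, provided `m`, `l` and `m + l` are invertible. -/
noncomputable def belyi (R : Type*) [CommRing R] (m l : ℕ) : R[X] := X ^ m * (X - C 1) ^ l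

section
variable {R : Type*} [CommRing R]

lemma belyi_monic (m l : ℕ) : (belyi R m l).Monic :=
  (monic_X_pow m).mul ((monic_X_sub_C 1).pow l)

lemma belyi_natDegree [Nontrivial R] (m l : ℕ) : (belyi R m l).natDegree = m + l := by
  rw [belyi, (monic_X_pow m).natDegree_mul ((monic_X_sub_C 1).pow l), natDegree_X_pow,
    (monic_X_sub_C 1).natDegree_pow, natDegree_X_sub_C, mul_one]

lemma belyi_map {S : Type*} [CommRing S] (φ : R →+* S) (m l : ℕ) :
    (belyi R m l).map φ = belyi S m l := by
  simp [belyi]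

lemma belyi_eval (m l : ℕ) (z : R) : (belyi R m l).eval z = z ^ m * (z - 1) ^ l := by
  simp [belyi]

lemma belyi_aeval {S : Type*} [CommRing S] [Algebra R S] (m l : ℕ) (z : S) :
    aeval z (belyi R m l) = z ^ m * (z - 1) ^ l := by
  simp [belyi]
end

section
variable {K : Type*} [Field K]

lemma belyi_ne_zero (m l : ℕ) : belyi K m l ≠ 0 := (belyi_monic m l).ne_zero

lemma rootMultiplicity_zero_belyi (m l : ℕ) : (belyi K m l).rootMultiplicity 0 = m := by
  rw [belyi, rootMultiplicity_mul (belyi_ne_zero m l)]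
  rw [rootMultiplicity_eq_zero (p := (X - C 1 : K[X]) ^ l) (by simp)]
  simpa using rootMultiplicity_X_sub_C_pow (0 : K) m

lemma rootMultiplicity_one_belyi (m l : ℕ) : (belyi K m l).rootMultiplicity 1 = l := by
  rw [belyi, rootMultiplicity_mul (belyi_ne_zero m l)]
  rw [rootMultiplicity_eq_zero (p := (X : K[X]) ^ m) (by simp), rootMultiplicity_X_sub_C_pow, zero_add]

lemma rootMultiplicity_pow' (p : K[X]) (x : K) (j : ℕ) :
    (p ^ j).rootMultiplicity x = j * p.rootMultiplicity x := by
  classical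
  rw [← count_roots, ← count_roots, roots_pow, Multiset.count_nsmul]

/-- A divisor of `X ^ m * (X - 1) ^ l` not vanishing at `1` is a constant times a power of `X`. -/
lemma dvd_belyi_of_eval (m l : ℕ) (p : K[X]) (hp : p ∣ belyi K m l) (h1 : p.eval 1 ≠ 0) :
    p.rootMultiplicity 0 = p.natDegree := by
  have hc : IsCoprime p ((X - C 1 : K[X]) ^ l) := by
    apply IsCoprime.pow_right
    exact ((irreducible_X_sub_C (1:K)).coprime_iff_not_dvd.mpr (by rwa [dvd_iff_isRoot])).symm
  have h2 := hc.dvd_of_dvd_mul_right hp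
  obtain ⟨i, -, hi⟩ := (dvd_prime_pow prime_X m).1 h2
  obtain ⟨u, hu⟩ := hi.symm
  obtain ⟨c, hc, hcu⟩ := Polynomial.isUnit_iff.1 u.isUnit
  have hc0 : c ≠ 0 := hc.ne_zero
  rw [← hcu] at hu
  have hX : (X : K[X]) ^ i = (X - C 0) ^ i := by simp
  rw [← hu, natDegree_mul_C hc0, natDegree_X_pow, rootMultiplicity_mul
    (mul_ne_zero (pow_ne_zero _ X_ne_zero) (by simpa)), rootMultiplicity_C, hX,
    rootMultiplicity_X_sub_C_pow, add_zero]

/-- A divisor of `X ^ m * (X - 1) ^ l` not vanishing at `0` is a constant times a power of `X - 1`. -/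
lemma dvd_belyi_of_eval' (m l : ℕ) (p : K[X]) (hp : p ∣ belyi K m l) (h1 : p.eval 0 ≠ 0) :
    p.rootMultiplicity 1 = p.natDegree := by
  have hc : IsCoprime p ((X : K[X]) ^ m) := by
    apply IsCoprime.pow_right
    have : IsCoprime p (X - C 0) :=
      ((irreducible_X_sub_C (0:K)).coprime_iff_not_dvd.mpr (by rwa [dvd_iff_isRoot])).symm
    simpa using this
  have h2 := hc.dvd_of_dvd_mul_left hp
  obtain ⟨i, -, hi⟩ := (dvd_prime_pow (prime_X_sub_C 1) l).1 h2
  obtain ⟨u, hu⟩ := hi.symm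
  obtain ⟨c, hc, hcu⟩ := Polynomial.isUnit_iff.1 u.isUnit
  have hc0 : c ≠ 0 := hc.ne_zero
  rw [← hcu] at hu
  rw [← hu, natDegree_mul_C hc0, natDegree_pow, natDegree_X_sub_C, mul_one, rootMultiplicity_mul
    (mul_ne_zero (pow_ne_zero _ (X_sub_C_ne_zero 1)) (by simpa)), rootMultiplicity_C,
    rootMultiplicity_X_sub_C_pow, add_zero]

lemma natDegree_eq_zero_of_dvd_belyi (m l : ℕ) (p : K[X]) (hp : p ∣ belyi K m l)
    (h0 : p.eval 0 ≠ 0) (h1 : p.eval 1 ≠ 0) : p.natDegree = 0 := by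
  rw [← dvd_belyi_of_eval m l p hp h1]
  exact rootMultiplicity_eq_zero h0

lemma exists_split_root (a : K[X]) (ha : a ≠ 0) (x : K) :
    ∃ a₁ : K[X], a = (X - C x) ^ (a.rootMultiplicity x) * a₁ ∧ a₁.eval x ≠ 0 := by
  obtain ⟨q, hq, hq'⟩ := exists_eq_pow_rootMultiplicity_mul_and_not_dvd a ha x
  exact ⟨q, hq, by rwa [dvd_iff_isRoot] at hq'⟩

/-- Write `g = a ∘ b`. If `b 0 = b 1`, the multiplicity of `b 0` as a root of `a` divides both `m` and
`l`, and `a` has no other root. If `b 0 ≠ b 1`, then `b - b 0` vanishes only at `0` and `b - b 1` only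
at `1`, so that `deg b` divides both `m` and `l`. -/
theorem belyi_indecomposable {m l : ℕ} (hm : 0 < m) (hl : 0 < l) (hml : m.Coprime l)
    (a b : K[X]) (h : belyi K m l = a.comp b) : a.natDegree = 1 ∨ b.natDegree = 1 := by
  have hg0 := belyi_ne_zero (K := K) m l
  have ha : a ≠ 0 := by rintro rfl; simp at h; exact hg0 h
  have hdeg : a.natDegree * b.natDegree = m + l := by
    rw [← natDegree_comp, ← h, belyi_natDegree]
  have hbd : b.natDegree ≠ 0 := by intro hb; rw [hb] at hdeg; omega
  have hbdC : ∀ x, (b - C x).natDegree = b.natDegree := fun x => natDegree_sub_C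
  have h0 : a.eval (b.eval 0) = 0 := by
    rw [← eval_comp, ← h, belyi]; simp [hm.ne']
  have h1 : a.eval (b.eval 1) = 0 := by
    rw [← eval_comp, ← h, belyi]; simp [hl.ne']
  obtain ⟨a₁, ha₁, ha₁'⟩ := exists_split_root a ha (b.eval 0)
  set p := a.rootMultiplicity (b.eval 0) with hp
  have hcomp : belyi K m l = (b - C (b.eval 0)) ^ p * a₁.comp b := by
    rw [h]; conv_lhs => rw [ha₁]
    simp
  have hm' : m = p * (b - C (b.eval 0)).rootMultiplicity 0 := by
    conv_lhs => rw [← rootMultiplicity_zero_belyi (K := K) m l, hcomp, rootMultiplicity_mul (hcomp ▸ hg0),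
      rootMultiplicity_eq_zero (p := a₁.comp b) (by simpa [eval_comp] using ha₁'),
      rootMultiplicity_pow']
    rfl
  have hp0 : p ≠ 0 := by rintro h; rw [h] at hm'; omega
  by_cases hb : b.eval 0 = b.eval 1
  · left
    have hl' : l = p * (b - C (b.eval 0)).rootMultiplicity 1 := by
      conv_lhs => rw [← rootMultiplicity_one_belyi (K := K) m l, hcomp, rootMultiplicity_mul (hcomp ▸ hg0),
        rootMultiplicity_eq_zero (p := a₁.comp b) (by simpa [eval_comp, ← hb] using ha₁'),
        rootMultiplicity_pow']
      rfl
    have hp1 : p = 1 := by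
      have := Nat.dvd_gcd (Dvd.intro _ hm'.symm) (Dvd.intro _ hl'.symm)
      rw [hml.gcd_eq_one] at this
      exact Nat.dvd_one.1 this
    have h2 : (a₁.comp b).natDegree = 0 := by
      apply natDegree_eq_zero_of_dvd_belyi m l _ (hcomp ▸ Dvd.intro_left _ rfl)
      · simpa [eval_comp] using ha₁'
      · simpa [eval_comp, ← hb] using ha₁'
    rw [natDegree_comp] at h2
    have h3 : a₁.natDegree = 0 := by
      rcases Nat.mul_eq_zero.1 h2 with h | h
      · exact h
      · exact absurd h hbd
    have ha₁0 : a₁ ≠ 0 := by rintro rfl; simp at ha₁'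
    rw [ha₁, natDegree_mul (pow_ne_zero _ (X_sub_C_ne_zero _)) ha₁0, natDegree_pow,
      natDegree_X_sub_C, h3, hp1]
  · right
    obtain ⟨a₂, ha₂, ha₂'⟩ := exists_split_root a ha (b.eval 1)
    set q := a.rootMultiplicity (b.eval 1) with hq
    have hcomp' : belyi K m l = (b - C (b.eval 1)) ^ q * a₂.comp b := by
      rw [h]; conv_lhs => rw [ha₂]
      simp
    have hl' : l = q * (b - C (b.eval 1)).rootMultiplicity 1 := by
      conv_lhs => rw [← rootMultiplicity_one_belyi (K := K) m l, hcomp', rootMultiplicity_mul (hcomp' ▸ hg0),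
        rootMultiplicity_eq_zero (p := a₂.comp b) (by simpa [eval_comp] using ha₂'),
        rootMultiplicity_pow']
      rfl
    have hq0 : q ≠ 0 := by rintro h; rw [h] at hl'; omega
    rw [dvd_belyi_of_eval m l (b - C (b.eval 0)) (hcomp ▸ ((dvd_pow_self _ hp0).mul_right _))
      (by simpa [sub_eq_zero] using Ne.symm hb), hbdC] at hm'
    rw [dvd_belyi_of_eval' m l (b - C (b.eval 1)) (hcomp' ▸ ((dvd_pow_self _ hq0).mul_right _))
      (by simpa [sub_eq_zero] using hb), hbdC] at hl'
    have := Nat.dvd_gcd (Dvd.intro_left _ hm'.symm) (Dvd.intro_left _ hl'.symm)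
    rw [hml.gcd_eq_one] at this
    exact Nat.dvd_one.1 this
end

/-! ### Lüroth for polynomials and intermediate fields -/

open IntermediateField

section
variable {K : Type*} [Field K]

/-- The value `q ^ (deg A) * A (p / q)` at `(p, q)` of the homogenization of `A`. -/
noncomputable def homEval (p q A : K[X]) : K[X] := ((A.map C).scaleRoots q).eval p

lemma homEval_eq_sum (p q A : K[X]) : homEval p q A =
    ∑ i ∈ Finset.range (A.natDegree + 1), C (A.coeff i) * q ^ (A.natDegree - i) * p ^ i := by
  rw [homEval, eval_eq_sum_range, natDegree_scaleRoots, natDegree_map_eq_of_injective C_injective]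
  simp [coeff_scaleRoots, natDegree_map_eq_of_injective C_injective]

lemma algebraMap_homEval (p q A : K[X]) (hq : q ≠ 0) :
    algebraMap K[X] (RatFunc K) (homEval p q A) = algebraMap K[X] (RatFunc K) q ^ A.natDegree *
      aeval (algebraMap K[X] (RatFunc K) p / algebraMap K[X] (RatFunc K) q) A := by
  have hq' : algebraMap K[X] (RatFunc K) q ≠ 0 := RatFunc.algebraMap_ne_zero hq
  rw [homEval_eq_sum, aeval_eq_sum_range, map_sum, Finset.mul_sum]
  refine Finset.sum_congr rfl fun i hi => ?_
  have hi : i ≤ A.natDegree := by simpa [Nat.lt_succ_iff] using hi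
  obtain ⟨j, hj⟩ := Nat.exists_eq_add_of_le hi
  rw [hj, Algebra.smul_def, RatFunc.algebraMap_eq_C]
  simp only [map_mul, map_pow, RatFunc.algebraMap_C, div_pow, Nat.add_sub_cancel_left]
  field_simp
  ring

/-- With `p / q` having a pole at infinity, the term of highest degree in `A` dominates. -/
lemma natDegree_homEval (p q A : K[X]) (hA : A ≠ 0) (h : q.natDegree < p.natDegree) :
    (homEval p q A).natDegree = A.natDegree * p.natDegree := by
  have hp : p ≠ 0 := by rintro rfl; simp at h
  have hlc : A.coeff A.natDegree ≠ 0 := by simpa using hA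
  have htop : (C (A.coeff A.natDegree) * q ^ (A.natDegree - A.natDegree) * p ^ A.natDegree).natDegree
      = A.natDegree * p.natDegree := by
    rw [Nat.sub_self, pow_zero, mul_one, natDegree_C_mul hlc, natDegree_pow]
  rw [homEval_eq_sum, Finset.sum_range_succ]
  rcases Nat.eq_zero_or_pos A.natDegree with h0 | h0
  · rw [h0] at htop ⊢
    simp
  · rw [natDegree_add_eq_right_of_natDegree_lt, htop]
    rw [htop]
    have : (∑ i ∈ Finset.range A.natDegree, C (A.coeff i) * q ^ (A.natDegree - i) * p ^ i).natDegree
        ≤ A.natDegree * p.natDegree - 1 := by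
      refine natDegree_sum_le_of_forall_le _ _ fun i hi => ?_
      obtain ⟨j, hj⟩ := Nat.exists_eq_add_of_lt (Finset.mem_range.1 hi)
      have h1 : (C (A.coeff i) * q ^ (A.natDegree - i) * p ^ i).natDegree
          ≤ (A.natDegree - i) * q.natDegree + i * p.natDegree := by
        refine natDegree_mul_le.trans (add_le_add ?_ natDegree_pow_le)
        exact (natDegree_C_mul_le _ _).trans natDegree_pow_le
      refine h1.trans (Nat.le_sub_one_of_lt ?_)
      rw [hj]
      have : i + j + 1 - i = j + 1 := by omega
      rw [this]
      nlinarith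
    have h2 : 0 < A.natDegree * p.natDegree := Nat.mul_pos h0 (by omega)
    omega

lemma isUnit_of_dvd_homEval (p q A : K[X]) (hA : A ≠ 0) (hpq : IsCoprime p q)
    (h : q ∣ homEval p q A) : IsUnit q := by
  have hlc : A.coeff A.natDegree ≠ 0 := by simpa using hA
  rw [homEval_eq_sum, Finset.sum_range_succ, Nat.sub_self, pow_zero, mul_one] at h
  have h1 : q ∣ ∑ i ∈ Finset.range A.natDegree, C (A.coeff i) * q ^ (A.natDegree - i) * p ^ i := by
    refine Finset.dvd_sum fun i hi => ?_
    have : A.natDegree - i ≠ 0 := by have := Finset.mem_range.1 hi; omega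
    exact ((dvd_pow_self q this).mul_left _).mul_right _
  have h2 := (dvd_add_right h1).1 h
  have h3 : q ∣ p ^ A.natDegree := by
    have hu : IsUnit (C (A.coeff A.natDegree)) := isUnit_C.2 (isUnit_iff_ne_zero.2 hlc)
    exact hu.dvd_mul_left.1 h2
  exact (hpq.symm.pow_right (n := A.natDegree)).isUnit_of_dvd' dvd_rfl h3

/-- A Lüroth generator can be normalized, by a fractional linear change, to have a pole at infinity. -/
lemma exists_generator_pole (F : IntermediateField K (RatFunc K)) (hF : F ≠ ⊥) :
    ∃ p q : K[X], q ≠ 0 ∧ IsCoprime p q ∧ q.natDegree < p.natDegree ∧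
      F = K⟮algebraMap K[X] (RatFunc K) p / algebraMap K[X] (RatFunc K) q⟯ := by
  set h := RatFunc.Luroth.generator F with hh
  have hFh : F = K⟮h⟯ := RatFunc.Luroth.eq_adjoin_generator
  have hC := RatFunc.Luroth.generator_ne_C hF
  by_cases hd : h.denom.natDegree < h.num.natDegree
  · refine ⟨h.num, h.denom, h.denom_ne_zero, h.isCoprime_num_denom, hd, ?_⟩
    rw [RatFunc.num_div_denom]; exact hFh
  set p := h.num
  set q := h.denom
  have hq : q ≠ 0 := h.denom_ne_zero
  set c : K := p.coeff q.natDegree / q.leadingCoeff with hc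
  have hqm : algebraMap K[X] (RatFunc K) q ≠ 0 := RatFunc.algebraMap_ne_zero hq
  have heq : algebraMap K[X] (RatFunc K) (p - C c * q) / algebraMap K[X] (RatFunc K) q =
      h - RatFunc.C c := by
    rw [map_sub, map_mul, sub_div, RatFunc.num_div_denom, mul_div_cancel_right₀ _ hqm,
      RatFunc.algebraMap_C]
  have hne : h - RatFunc.C c ≠ 0 := fun h0 => hC ⟨c, sub_eq_zero.1 h0⟩
  have hpc : p - C c * q ≠ 0 := by
    intro h0; rw [h0] at heq; simp at heq; exact hne heq.symm
  have hcop : IsCoprime q (p - C c * q) := by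
    have : IsCoprime q p := h.isCoprime_num_denom.symm
    have := this.add_mul_left_right (-C c)
    convert! this using 1
    ring
  refine ⟨q, p - C c * q, hpc, hcop, ?_, ?_⟩
  · have hle : (p - C c * q).natDegree ≤ q.natDegree := by
      refine (natDegree_sub_le _ _).trans (max_le (by omega) (natDegree_C_mul_le _ _))
    refine lt_of_le_of_ne hle fun heq' => ?_
    have : (p - C c * q).coeff q.natDegree = 0 := by
      rw [coeff_sub, coeff_C_mul, hc, coeff_natDegree, div_mul_cancel₀ _ (by simpa using hq), sub_self]
    rw [← heq', coeff_natDegree, leadingCoeff_eq_zero] at this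
    exact hpc this
  · have h1 : algebraMap K[X] (RatFunc K) q / algebraMap K[X] (RatFunc K) (p - C c * q) =
      (h - RatFunc.C c)⁻¹ := by rw [← heq, inv_div]
    rw [h1, hFh]
    apply le_antisymm
    · rw [adjoin_simple_le_iff]
      have h2 : (h - RatFunc.C c)⁻¹ ∈ K⟮(h - RatFunc.C c)⁻¹⟯ := mem_adjoin_simple_self _ _
      have h3 := add_mem (inv_mem h2) (IntermediateField.algebraMap_mem (K⟮(h - RatFunc.C c)⁻¹⟯) c)
      rwa [inv_inv, RatFunc.algebraMap_eq_C, sub_add_cancel] at h3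
    · rw [adjoin_simple_le_iff]
      refine inv_mem (sub_mem (mem_adjoin_simple_self _ _) ?_)
      rw [← RatFunc.algebraMap_eq_C]
      exact IntermediateField.algebraMap_mem _ c

/-- Polynomial form of Lüroth: if `F` contains a nonconstant polynomial `g`, then `F` is generated by
a polynomial `b`, and `g` is a polynomial in `b`. -/
theorem exists_comp_of_mem (F : IntermediateField K (RatFunc K)) (g : K[X]) (hg : 0 < g.natDegree)
    (hgF : algebraMap K[X] (RatFunc K) g ∈ F) :
    ∃ a b : K[X], F = K⟮algebraMap K[X] (RatFunc K) b⟯ ∧ g = a.comp b := by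
  have hF : F ≠ ⊥ := by
    rintro rfl
    obtain ⟨c, hc⟩ := IntermediateField.mem_bot.1 hgF
    rw [RatFunc.algebraMap_eq_C, ← RatFunc.algebraMap_C] at hc
    have := RatFunc.algebraMap_injective K hc
    rw [← this] at hg; simp at hg
  have hg0 : g ≠ 0 := by rintro rfl; simp at hg
  obtain ⟨p, q, hq, hpq, hd, hFpq⟩ := exists_generator_pole F hF
  set h := algebraMap K[X] (RatFunc K) p / algebraMap K[X] (RatFunc K) q with hh
  have hqm : algebraMap K[X] (RatFunc K) q ≠ 0 := RatFunc.algebraMap_ne_zero hq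
  have hgm : algebraMap K[X] (RatFunc K) g ≠ 0 := RatFunc.algebraMap_ne_zero hg0
  -- `g` as a reduced fraction `A / B` in the generator `h` of `F`
  obtain ⟨A, B, hAB, hB, hgAB⟩ : ∃ A B : K[X], IsCoprime A B ∧ aeval h B ≠ 0 ∧
      algebraMap K[X] (RatFunc K) g * aeval h B = aeval h A := by
    rw [hFpq] at hgF
    obtain ⟨A, B, hAB⟩ := (mem_adjoin_simple_iff _ _).1 hgF
    have hB0 : aeval h B ≠ 0 := by rintro h0; rw [h0, div_zero] at hAB; exact hgm hAB
    have hB : B ≠ 0 := by rintro rfl; simp at hB0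
    classical
    obtain ⟨d, A', B', hcop, hA', hB'⟩ : ∃ d A' B' : K[X], IsCoprime A' B' ∧ A = d * A' ∧
        B = d * B' := by
      obtain ⟨A', B', h1, h2, h3⟩ := extract_gcd A B
      exact ⟨_, A', B', (gcd_isUnit_iff _ _).1 h3, h1, h2⟩
    refine ⟨A', B', hcop, ?_, ?_⟩
    · intro h0; apply hB0; rw [hB', map_mul, h0, mul_zero]
    · have h1 := (eq_div_iff hB0).1 hAB
      have h2 : aeval h d ≠ 0 := by
        intro h0; apply hB0; rw [hB', map_mul, h0, zero_mul]
      apply mul_left_cancel₀ h2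
      rw [← map_mul, ← hA', ← h1]
      conv_rhs => rw [hB', map_mul]
      ring
  have hB0 : B ≠ 0 := by rintro rfl; simp at hB
  have hA0 : A ≠ 0 := by
    rintro rfl; rw [map_zero] at hgAB; exact mul_ne_zero hgm hB hgAB
  have key : g * homEval p q B * q ^ A.natDegree = homEval p q A * q ^ B.natDegree := by
    apply RatFunc.algebraMap_injective K
    simp only [map_mul, map_pow, algebraMap_homEval _ _ _ hq]
    rw [← hh, ← hgAB]; ring
  have hqu : IsUnit q := by
    -- `deg A ≤ deg B` is impossible: `h` has a pole at infinity, and so has `g`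
    rcases le_or_gt A.natDegree B.natDegree with hle | hlt
    · exfalso
      obtain ⟨j, hj⟩ := Nat.exists_eq_add_of_le hle
      have hBB : homEval p q B ≠ 0 := by
        intro h0
        have := algebraMap_homEval p q B hq
        rw [h0, map_zero] at this
        exact mul_ne_zero (pow_ne_zero _ hqm) hB this.symm
      have hAA : homEval p q A ≠ 0 := by
        intro h0; rw [h0, zero_mul] at key
        exact mul_ne_zero (mul_ne_zero hg0 hBB) (pow_ne_zero _ hq) key
      have := congrArg natDegree key
      rw [natDegree_mul (mul_ne_zero hg0 hBB) (pow_ne_zero _ hq), natDegree_mul hg0 hBB,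
        natDegree_mul hAA (pow_ne_zero _ hq), natDegree_homEval _ _ _ hA0 hd,
        natDegree_homEval _ _ _ hB0 hd, natDegree_pow, natDegree_pow, hj] at this
      nlinarith
    · obtain ⟨j, hj⟩ := Nat.exists_eq_add_of_lt hlt
      apply isUnit_of_dvd_homEval p q A hA0 hpq
      have : homEval p q A = q * (g * homEval p q B * q ^ j) := by
        apply mul_right_cancel₀ (pow_ne_zero B.natDegree hq)
        rw [← key, hj]; ring
      exact Dvd.intro _ this.symm
  obtain ⟨c, hc, rfl⟩ := Polynomial.isUnit_iff.1 hqu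
  have hc0 : c ≠ 0 := hc.ne_zero
  set b := C c⁻¹ * p with hb
  have hhb : h = algebraMap K[X] (RatFunc K) b := by
    rw [hh, div_eq_iff hqm, ← map_mul, hb, mul_comm, ← mul_assoc, ← C_mul, mul_inv_cancel₀ hc0, C_1,
      one_mul]
  have hbd : 0 < b.natDegree := by
    rw [hb, natDegree_C_mul (inv_ne_zero hc0)]; omega
  have haev : ∀ P : K[X], aeval h P = algebraMap K[X] (RatFunc K) (P.comp b) := by
    intro P; rw [hhb, aeval_algebraMap_apply]; rfl
  rw [haev, haev, ← map_mul] at hgAB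
  have hgAB' := RatFunc.algebraMap_injective K hgAB
  have hcop : IsCoprime (A.comp b) (B.comp b) := hAB.map (compRingHom b)
  have hBu : IsUnit (B.comp b) := hcop.isUnit_of_dvd' (Dvd.intro_left _ hgAB') dvd_rfl
  have hBd := natDegree_eq_zero_of_isUnit hBu
  rw [natDegree_comp] at hBd
  have hBd' : B.natDegree = 0 := by
    rcases Nat.mul_eq_zero.1 hBd with h | h
    · exact h
    · omega
  obtain ⟨β, rfl⟩ : ∃ β, B = C β := ⟨_, eq_C_of_natDegree_eq_zero hBd'⟩
  have hβ : β ≠ 0 := by rintro rfl; simp at hB0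
  refine ⟨C β⁻¹ * A, b, by rw [hFpq, hhb], ?_⟩
  rw [mul_comp, ← hgAB', C_comp, C_comp, mul_comm g, ← mul_assoc, ← C_mul, inv_mul_cancel₀ hβ, C_1,
    one_mul]

lemma exists_linear_inv (a : K[X]) (ha : a.natDegree = 1) : ∃ u v : K, u ≠ 0 ∧ a = C u * X + C v := by
  exact ⟨a.coeff 1, a.coeff 0, by rw [← ha]; simp; rintro rfl; simp at ha,
    eq_X_add_C_of_natDegree_le_one ha.le⟩

lemma mem_adjoin_linear {L : Type*} [Field L] [Algebra K L] (x y : L) (u v : K) (hu : u ≠ 0)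
   (h : y = algebraMap K L u * x + algebraMap K L v) : x ∈ K⟮y⟯ := by
  have h1 : x = algebraMap K L u⁻¹ * (y - algebraMap K L v) := by
    have : algebraMap K L u ≠ 0 := by simpa
    rw [h, map_inv₀]; field_simp; ring
  rw [h1]
  exact mul_mem (IntermediateField.algebraMap_mem _ _)
    (sub_mem (mem_adjoin_simple_self _ _) (IntermediateField.algebraMap_mem _ _))

/-- `K(x) / K(g(x))` has no proper intermediate field, where `g = X ^ m * (X - 1) ^ l`. -/
theorem belyi_no_intermediate {m l : ℕ} (hm : 0 < m) (hl : 0 < l) (hml : m.Coprime l)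
    (F : IntermediateField K (RatFunc K))
    (hF : algebraMap K[X] (RatFunc K) (belyi K m l) ∈ F) :
    F = K⟮algebraMap K[X] (RatFunc K) (belyi K m l)⟯ ∨ F = ⊤ := by
  obtain ⟨a, b, hFb, hab⟩ := exists_comp_of_mem F _ (by rw [belyi_natDegree]; omega) hF
  rcases belyi_indecomposable hm hl hml a b hab with h | h
  · left
    obtain ⟨u, v, hu, rfl⟩ := exists_linear_inv a h
    apply le_antisymm
    · rw [hFb, adjoin_simple_le_iff]
      apply mem_adjoin_linear _ _ u v hu
      rw [hab]; simp [RatFunc.algebraMap_eq_C]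
    · rwa [adjoin_simple_le_iff]
  · right
    obtain ⟨u, v, hu, rfl⟩ := exists_linear_inv b h
    rw [eq_top_iff, ← RatFunc.adjoin_X, hFb, adjoin_simple_le_iff]
    apply mem_adjoin_linear _ _ u v hu
    simp [RatFunc.algebraMap_eq_C]
end

/-! ### The generic fibre: irreducibility and primitivity -/

/-- The family `X ^ m * (X - 1) ^ l - T`, as a polynomial in `X` (the outer variable) with
coefficients in `R[T]` (the inner variable). -/
noncomputable def fam (R : Type*) [CommRing R] (m l : ℕ) : R[X][X] := belyi R[X] m l - C X

section
variable {R : Type*} [CommRing R]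

lemma fam_natDegree [Nontrivial R] (m l : ℕ) : (fam R m l).natDegree = m + l := by
  rw [fam, natDegree_sub_C, belyi_natDegree]

lemma fam_monic {m : ℕ} (hm : 0 < m) (l : ℕ) : (fam R m l).Monic := by
  nontriviality R
  refine (belyi_monic m l).sub_of_left (degree_C_le.trans_lt ?_)
  rw [← natDegree_pos_iff_degree_pos, belyi_natDegree]; omega

lemma fam_map {S : Type*} [CommRing S] (φ : R[X] →+* S) (m l : ℕ) :
    (fam R m l).map φ = belyi S m l - C (φ X) := by
  rw [fam, Polynomial.map_sub, belyi_map, map_C]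

lemma fam_root_iff {S : Type*} [CommRing S] (φ : R[X] →+* S) (m l : ℕ) (z : S) :
    ((fam R m l).map φ).eval z = 0 ↔ z ^ m * (z - 1) ^ l = φ X := by
  rw [fam_map, eval_sub, belyi_eval, eval_C, sub_eq_zero]
end

section
variable {K : Type*} [Field K]

/-- Irreducibility holds because the family has degree one in `T`. -/
lemma fam_irreducible {m : ℕ} (l : ℕ) : Irreducible (fam K m l) := by
  have : fam K m l = Bivariate.swap (C (-1) * X + C (belyi K m l)) := by
    simp only [fam, Bivariate.swap_apply, map_add, map_mul, aevalAeval, aevalAevalEquiv]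
    simp [belyi]
    ring
  rw [this, MulEquiv.irreducible_iff]
  exact irreducible_C_mul_X_add_C (by simp) (isUnit_one.neg.isRelPrime_left)

/-- The family `X ^ m * (X - 1) ^ l - T` over the rational function field `K(T)`. -/
noncomputable def famF (K : Type*) [Field K] (m l : ℕ) : (RatFunc K)[X] :=
  (fam K m l).map (algebraMap K[X] (RatFunc K))

lemma famF_eq (m l : ℕ) : famF K m l = belyi (RatFunc K) m l - C RatFunc.X := by
  rw [famF, fam_map, RatFunc.algebraMap_X]

lemma famF_monic {m : ℕ} (hm : 0 < m) (l : ℕ) : (famF K m l).Monic := (fam_monic hm l).map _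

lemma famF_natDegree {m : ℕ} (hm : 0 < m) (l : ℕ) : (famF K m l).natDegree = m + l := by
  rw [famF, (fam_monic hm l).natDegree_map, fam_natDegree]

lemma famF_irreducible {m : ℕ} (hm : 0 < m) (l : ℕ) : Irreducible (famF K m l) := by
  rw [famF, ← (fam_monic hm l).irreducible_iff_irreducible_map_fraction_map]
  exact fam_irreducible l

lemma famF_separable {m : ℕ} (hm : 0 < m) (l : ℕ) (hn : ((m + l : ℕ) : K) ≠ 0) :
    (famF K m l).Separable := by
  refine (separable_iff_derivative_ne_zero (famF_irreducible hm l)).2 fun h => ?_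
  have h1 := congrArg (fun p => coeff p (m + l - 1)) h
  have h2 : m + l - 1 + 1 = m + l := by omega
  have h3 : (famF K m l).coeff (m + l) = 1 := by
    have := famF_monic (K := K) hm l
    rwa [Monic, leadingCoeff, famF_natDegree hm] at this
  simp only [coeff_derivative, h2, h3, coeff_zero, one_mul] at h1
  apply hn
  apply (algebraMap K (RatFunc K)).injective
  rw [map_natCast, map_zero, ← h1]
  exact_mod_cast congrArg (Nat.cast (R := RatFunc K)) h2.symm

variable {L : Type*} [Field L] [Algebra (RatFunc K) L]

lemma mem_rootSet_famF {m : ℕ} (hm : 0 < m) (l : ℕ) (z : L) :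
    z ∈ (famF K m l).rootSet L ↔ z ^ m * (z - 1) ^ l = algebraMap (RatFunc K) L RatFunc.X := by
  rw [mem_rootSet_of_ne (famF_monic (K := K) hm l).ne_zero, famF_eq]
  simp [belyi_aeval, sub_eq_zero]

lemma famF_pretransitive [IsGalois (RatFunc K) L] {m : ℕ} (hm : 0 < m) (l : ℕ) :
    MulAction.IsPretransitive (L ≃ₐ[RatFunc K] L) ((famF K m l).rootSet L) := by
  refine ⟨fun x y => ?_⟩
  have hx := minpoly.eq_of_irreducible_of_monic (famF_irreducible hm l)
    (aeval_eq_zero_of_mem_rootSet x.2) (famF_monic hm l)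
  have hy := minpoly.eq_of_irreducible_of_monic (famF_irreducible hm l)
    (aeval_eq_zero_of_mem_rootSet y.2) (famF_monic hm l)
  obtain ⟨σ, hσ⟩ := (Normal.minpoly_eq_iff_mem_orbit (F := RatFunc K) (E := L)
    (x := (y : L)) (y := (x : L))).1 (by rw [← hx, ← hy])
  exact ⟨σ, Subtype.ext hσ⟩

variable [Algebra K L] [IsScalarTower K (RatFunc K) L]

/-- The field generated over `K(T)` by one root `z` of the family is the rational function field
`K(z)`, in which `K(T)` is maximal by `belyi_no_intermediate`. -/
lemma root_no_intermediate {m l : ℕ} (hm : 0 < m) (hl : 0 < l) (hml : m.Coprime l) (z : L)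
    (hz : z ^ m * (z - 1) ^ l = algebraMap (RatFunc K) L RatFunc.X)
    (M : IntermediateField (RatFunc K) L) (hM : M ≤ (RatFunc K)⟮z⟯) :
    M = ⊥ ∨ z ∈ M := by
  have htr : Transcendental K z := by
    intro halg
    have h1 : IsAlgebraic K (algebraMap (RatFunc K) L RatFunc.X) := by
      rw [← hz]
      have hi := halg.isIntegral
      exact ((hi.pow m).mul ((hi.sub isIntegral_one).pow l)).isAlgebraic
    rw [isAlgebraic_algebraMap_iff (algebraMap (RatFunc K) L).injective] at h1
    exact RatFunc.transcendental_X h1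
  have hinj : Function.Injective (aeval z : K[X] →ₐ[K] L) :=
    transcendental_iff_injective.1 htr
  let φ : RatFunc K →ₐ[K] L := RatFunc.liftAlgHom (aeval z)
    (nonZeroDivisors_le_comap_nonZeroDivisors_of_injective _ hinj)
  have hφ : ∀ p : K[X], φ (algebraMap _ _ p) = aeval z p := by
    intro p
    have := RatFunc.liftAlgHom_apply_div (aeval z)
      (nonZeroDivisors_le_comap_nonZeroDivisors_of_injective _ hinj) p 1
    simpa using this
  have hφX : φ RatFunc.X = z := by rw [← RatFunc.algebraMap_X, hφ, aeval_X]
  have hφg : φ (algebraMap _ _ (belyi K m l)) = algebraMap (RatFunc K) L RatFunc.X := by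
    rw [hφ, belyi_aeval, hz]
  have hbase : ∀ a : RatFunc K, algebraMap (RatFunc K) L a ∈
      (K⟮algebraMap K[X] (RatFunc K) (belyi K m l)⟯).map φ := by
    intro a
    have ha : a ∈ K⟮(RatFunc.X : RatFunc K)⟯ := by rw [RatFunc.adjoin_X]; trivial
    have h2 : IsScalarTower.toAlgHom K (RatFunc K) L a ∈
        (K⟮(RatFunc.X : RatFunc K)⟯).map (IsScalarTower.toAlgHom K (RatFunc K) L) := ⟨a, ha, rfl⟩
    rw [adjoin_map, Set.image_singleton] at h2 ⊢
    rw [hφg]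
    exact h2
  have hbase' : ∀ a : RatFunc K, algebraMap (RatFunc K) L a ∈ φ.fieldRange := by
    intro a
    obtain ⟨y, -, hy⟩ := hbase a
    exact ⟨y, hy⟩
  have hrange : ∀ x ∈ (RatFunc K)⟮z⟯, x ∈ φ.fieldRange := by
    intro x hx
    induction hx using adjoin_induction with
    | mem x hx => rw [Set.mem_singleton_iff.1 hx]; exact ⟨_, hφX⟩
    | algebraMap x => exact hbase' x
    | add x y _ _ hx hy => exact add_mem hx hy
    | inv x _ hx => exact inv_mem hx
    | mul x y _ _ hx hy => exact mul_mem hx hy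
  rcases belyi_no_intermediate hm hl hml ((M.restrictScalars K).comap φ)
    (by
      change φ _ ∈ M
      rw [hφg]; exact M.algebraMap_mem _) with h | h
  · left
    rw [eq_bot_iff]
    intro x hx
    obtain ⟨y, rfl⟩ := hrange x (hM hx)
    have hy : y ∈ (M.restrictScalars K).comap φ := hx
    rw [h] at hy
    have h3 : φ y ∈ (K⟮algebraMap K[X] (RatFunc K) (belyi K m l)⟯).map φ := ⟨y, hy, rfl⟩
    rw [adjoin_map, Set.image_singleton] at h3
    have h4 : K⟮φ (algebraMap K[X] (RatFunc K) (belyi K m l))⟯ ≤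
        (⊥ : IntermediateField (RatFunc K) L).restrictScalars K := by
      rw [adjoin_simple_le_iff, hφg]
      exact (⊥ : IntermediateField (RatFunc K) L).algebraMap_mem _
    exact h4 h3
  · right
    have : RatFunc.X ∈ (M.restrictScalars K).comap φ := by rw [h]; trivial
    rw [← hφX]
    exact this

variable [IsGalois (RatFunc K) L] [FiniteDimensional (RatFunc K) L]

/-- The Galois action on the roots is primitive: by `root_no_intermediate` the stabilizer of a root is
a maximal subgroup. -/
lemma famF_preprimitive {m l : ℕ} (hm : 0 < m) (hl : 0 < l) (hml : m.Coprime l)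
    [Nontrivial ((famF K m l).rootSet L)] :
    MulAction.IsPreprimitive (L ≃ₐ[RatFunc K] L) ((famF K m l).rootSet L) := by
  have := famF_pretransitive (K := K) (L := L) hm l
  obtain ⟨z, hz⟩ : Nonempty ((famF K m l).rootSet L) := inferInstance
  rw [← MulAction.isCoatom_stabilizer_iff_preprimitive _ (⟨z, hz⟩ : (famF K m l).rootSet L)]
  have hst : MulAction.stabilizer (L ≃ₐ[RatFunc K] L) (⟨z, hz⟩ : (famF K m l).rootSet L) =
      fixingSubgroup (RatFunc K)⟮z⟯ := by
    ext σ
    rw [MulAction.mem_stabilizer_iff, Subtype.ext_iff, IntermediateField.mem_fixingSubgroup_iff]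
    change σ z = z ↔ _
    constructor
    · intro h x hx
      induction hx using adjoin_induction with
      | mem x hx => rw [Set.mem_singleton_iff.1 hx]; exact h
      | algebraMap x => exact σ.commutes x
      | add x y _ _ hx hy => rw [map_add, hx, hy]
      | inv x _ hx => rw [map_inv₀, hx]
      | mul x y _ _ hx hy => rw [map_mul, hx, hy]
    · intro h; exact h z (mem_adjoin_simple_self _ _)
  refine ⟨fun htop => ?_, fun H hH => ?_⟩
  · obtain ⟨w, hw⟩ := exists_ne (⟨z, hz⟩ : (famF K m l).rootSet L)
    obtain ⟨σ, hσ⟩ := MulAction.exists_smul_eq (L ≃ₐ[RatFunc K] L) (⟨z, hz⟩ : (famF K m l).rootSet L) w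
    have : σ ∈ MulAction.stabilizer (L ≃ₐ[RatFunc K] L) (⟨z, hz⟩ : (famF K m l).rootSet L) := by
      rw [htop]; trivial
    rw [MulAction.mem_stabilizer_iff] at this
    exact hw (hσ.symm.trans this)
  · have hle : fixedField H ≤ (RatFunc K)⟮z⟯ := by
      rw [← IsGalois.fixedField_fixingSubgroup (RatFunc K)⟮z⟯, ← hst]
      exact fixedField_antitone hH.le
    rcases root_no_intermediate hm hl hml z ((mem_rootSet_famF hm l z).1 hz) _ hle with h | h
    · rw [← fixingSubgroup_fixedField H, h, fixingSubgroup_bot]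
    · exfalso
      apply hH.not_ge
      rw [hst, ← fixingSubgroup_fixedField H]
      exact IntermediateField.fixingSubgroup_antitone (adjoin_simple_le_iff.2 h)

end

/-! ### The fibre over the critical value of `m / (m + l)` -/

section
variable {D : Type*} [CommRing D]

/-- The logarithmic derivative of `X ^ m * (X - 1) ^ l`, with denominators cleared. -/
lemma belyi_derivative {m l : ℕ} (hm : 0 < m) (hl : 0 < l) :
    derivative (belyi D m l) * (X * (X - C 1)) =
      belyi D m l * (C ((m + l : ℕ) : D) * X - C (m : D)) := by
  obtain ⟨m, rfl⟩ := Nat.exists_eq_succ_of_ne_zero hm.ne'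
  obtain ⟨l, rfl⟩ := Nat.exists_eq_succ_of_ne_zero hl.ne'
  simp [belyi, derivative_mul, derivative_pow]
  ring

/-- If `c` is a root of multiplicity at least `j + 1` of `X ^ m * (X - 1) ^ l - t`, then
`(X - c) ^ j` divides the derivative; times `X * (X - 1)`, the latter is congruent to
`t * ((m + l) * X - m)` modulo `X ^ m * (X - 1) ^ l - t`. -/
lemma dvd_of_pow_dvd_belyi_sub {m l : ℕ} (hm : 0 < m) (hl : 0 < l) (t c : D) (j : ℕ)
    (h : (X - C c) ^ (j + 1) ∣ belyi D m l - C t) :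
    (X - C c) ^ j ∣ C t * (C ((m + l : ℕ) : D) * X - C (m : D)) := by
  have h1 := pow_sub_one_dvd_derivative_of_pow_dvd h
  rw [derivative_sub, derivative_C, sub_zero, Nat.add_sub_cancel] at h1
  have h2 := h1.mul_right (X * (X - C 1))
  rw [belyi_derivative hm hl] at h2
  have h3 := ((pow_dvd_pow _ (Nat.le_succ j)).trans h).mul_right (C ((m + l : ℕ) : D) * X - C (m : D))
  have h4 := dvd_sub h2 h3
  rw [← sub_mul] at h4
  simpa using h4

variable [IsDomain D]

lemma eq_of_sq_dvd_belyi_sub {m l : ℕ} (hm : 0 < m) (hl : 0 < l) (t c : D) (ht : t ≠ 0)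
    (h : (X - C c) ^ 2 ∣ belyi D m l - C t) : ((m + l : ℕ) : D) * c = m := by
  have h1 := dvd_of_pow_dvd_belyi_sub hm hl t c 1 h
  rw [pow_one, dvd_iff_isRoot] at h1
  simpa [ht, sub_eq_zero] using h1

lemma not_cube_dvd_belyi_sub {m l : ℕ} (hm : 0 < m) (hl : 0 < l) (t c : D) (ht : t ≠ 0)
    (hn : ((m + l : ℕ) : D) ≠ 0) : ¬ (X - C c) ^ 3 ∣ belyi D m l - C t := by
  intro h
  have h1 := dvd_of_pow_dvd_belyi_sub hm hl t c 2 h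
  have h2 : C t * (C ((m + l : ℕ) : D) * X - C (m : D)) = 0 := by
    refine eq_zero_of_dvd_of_natDegree_lt h1 ?_
    rw [(monic_X_sub_C c).natDegree_pow, natDegree_X_sub_C]
    refine (natDegree_C_mul_le _ _).trans_lt ?_
    rw [natDegree_sub_C]
    exact (natDegree_C_mul_le _ _).trans_lt (by simp)
  have h3 := congrArg (fun p => coeff p 1) h2
  simp at h3
  rcases h3 with h3 | h3
  · exact ht h3
  · exact hn (by exact_mod_cast h3)

end

section
variable {K : Type*} [Field K]

/-- `m / (m + l)` is a critical point of `X ^ m * (X - 1) ^ l`. -/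
lemma sq_dvd_belyi_sub {m l : ℕ} (hm : 0 < m) (hl : 0 < l) (hm0 : (m : K) ≠ 0) (hl0 : (l : K) ≠ 0)
    (hn : ((m + l : ℕ) : K) ≠ 0) :
    (X - C ((m : K) / (m + l : ℕ))) ^ 2 ∣
      belyi K m l - C ((belyi K m l).eval ((m : K) / (m + l : ℕ))) := by
  set z := (m : K) / (m + l : ℕ) with hz
  have hz0 : z ≠ 0 := div_ne_zero hm0 hn
  have hz1 : z - 1 ≠ 0 := by
    have : z - 1 = - (l : K) / (m + l : ℕ) := by rw [hz]; field_simp; push_cast; ring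
    rw [this]; exact div_ne_zero (neg_ne_zero.2 hl0) hn
  have hd : (derivative (belyi K m l)).eval z = 0 := by
    have h1 := congrArg (eval z) (belyi_derivative (D := K) hm hl)
    have h2 : ((m + l : ℕ) : K) * z - m = 0 := by rw [hz, mul_div_cancel₀ _ hn, sub_self]
    rw [eval_mul, eval_mul, eval_mul, eval_sub, eval_sub, eval_X, eval_C, eval_mul, eval_C, eval_C,
      eval_X, h2, mul_zero] at h1
    exact (mul_eq_zero.1 h1).resolve_right (mul_ne_zero hz0 hz1)
  set P := belyi K m l - C ((belyi K m l).eval z) with hP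
  obtain ⟨q, hq⟩ : (X - C z) ∣ P := by rw [dvd_iff_isRoot]; simp [hP]
  have hd' : (derivative P).eval z = 0 := by rw [hP, derivative_sub, derivative_C, sub_zero, hd]
  rw [hq] at hd'
  simp [derivative_mul] at hd'
  obtain ⟨q', rfl⟩ := dvd_iff_isRoot.2 hd'
  exact ⟨q', by rw [hq]; ring⟩

variable {B ι : Type*} [CommRing B] [Fintype ι]

/-- Let `t₀` be the value of `X ^ m * (X - 1) ^ l` at `m / (m + l)`, and `Q` a prime over `T - t₀` in a
ring where the family splits. Then `T - t₀ ∈ Q ^ 2`, since some root is congruent to the critical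
point. Modulo `Q` the roots are distinct except for one double root, so a nontrivial permutation of
the roots that is trivial modulo `Q` is a transposition. -/
theorem local_analysis {m l : ℕ} (hm : 0 < m) (hl : 0 < l) (hm0 : (m : K) ≠ 0) (hl0 : (l : K) ≠ 0)
    (hn : ((m + l : ℕ) : K) ≠ 0) (φ : K[X] →+* B) (Q : Ideal B) [Q.IsPrime] (z : ι → B)
    (hz : (fam K m l).map φ = ∏ i, (X - C (z i)))
    (hQ : φ (X - C ((belyi K m l).eval ((m : K) / (m + l : ℕ)))) ∈ Q) :
    φ (X - C ((belyi K m l).eval ((m : K) / (m + l : ℕ)))) ∈ Q ^ 2 ∧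
    ∀ [DecidableEq ι] (π : Equiv.Perm ι), π ≠ 1 → (∀ i, z (π i) - z i ∈ Q) → π.IsSwap := by
  set z₀ := (m : K) / (m + l : ℕ) with hz₀
  set t₀ := (belyi K m l).eval z₀ with ht₀
  have hz0 : z₀ ≠ 0 := div_ne_zero hm0 hn
  have hz1 : z₀ - 1 ≠ 0 := by
    have : z₀ - 1 = - (l : K) / (m + l : ℕ) := by rw [hz₀]; field_simp; push_cast; ring
    rw [this]; exact div_ne_zero (neg_ne_zero.2 hl0) hn
  have ht0 : t₀ ≠ 0 := by
    rw [ht₀, belyi_eval]; exact mul_ne_zero (pow_ne_zero _ hz0) (pow_ne_zero _ hz1)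
  let q : B →+* B ⧸ Q := Ideal.Quotient.mk Q
  let θ : K →+* B := φ.comp C
  have hqX : q (φ X) = q (θ t₀) := by
    rw [← sub_eq_zero, ← map_sub]
    change q (φ X - φ (C t₀)) = 0
    rw [← map_sub]; exact Ideal.Quotient.eq_zero_iff_mem.2 hQ
  have hprod : belyi (B ⧸ Q) m l - C (q (θ t₀)) = ∏ i, (X - C (q (z i))) := by
    have := congrArg (Polynomial.map q) hz
    rw [Polynomial.map_map, fam_map, Polynomial.map_prod] at this
    simpa [hqX] using this
  have ht0' : q (θ t₀) ≠ 0 := fun h => ht0 ((q.comp θ).injective (by simpa using h))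
  have hn' : ((m + l : ℕ) : B ⧸ Q) ≠ 0 := by
    intro h
    apply hn
    apply (q.comp θ).injective
    rw [map_natCast, h, map_zero]
  constructor
  · obtain ⟨i, hi⟩ : ∃ i, q (z i) = q (θ z₀) := by
      have h1 := congrArg (eval (q (θ z₀))) hprod
      have h2 : (belyi (B ⧸ Q) m l).eval (q (θ z₀)) = q (θ t₀) := by
        rw [ht₀, ← belyi_map (q.comp θ), ← RingHom.comp_apply, ← RingHom.comp_apply,
          eval_map_apply]
      rw [eval_sub, h2, eval_C, sub_self, eval_prod] at h1
      obtain ⟨i, -, hi⟩ := Finset.prod_eq_zero_iff.1 h1.symm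
      exact ⟨i, by simpa [sub_eq_zero, eq_comm (a := q (θ z₀))] using hi⟩
    obtain ⟨h, hh⟩ := sq_dvd_belyi_sub hm hl hm0 hl0 hn
    have h1 := congrArg (eval₂ θ (z i)) hh
    have h2 : eval₂ θ (z i) (belyi K m l) = φ X := by
      rw [← eval_map, belyi_map, belyi_eval]
      rw [← fam_root_iff, hz, eval_prod]
      exact Finset.prod_eq_zero (Finset.mem_univ i) (by simp)
    rw [eval₂_sub, h2, eval₂_C, eval₂_mul, eval₂_pow, eval₂_sub, eval₂_X, eval₂_C] at h1
    rw [map_sub]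
    change φ X - θ t₀ ∈ _
    rw [h1]
    refine Ideal.mul_mem_right _ _ (Ideal.pow_mem_pow ?_ 2)
    exact (Ideal.Quotient.mk_eq_mk_iff_sub_mem _ _).1 hi
  · intro _ π hπ hin
    have hq : ∀ i, q (z (π i)) = q (z i) := fun i => (Ideal.Quotient.mk_eq_mk_iff_sub_mem _ _).2 (hin i)
    have hres : ∀ i, π i ≠ i → ((m + l : ℕ) : B ⧸ Q) * q (z i) = m := by
      intro i hi
      apply eq_of_sq_dvd_belyi_sub hm hl _ _ ht0'
      rw [hprod]
      have := Finset.prod_dvd_prod_of_subset {i, π i} Finset.univ (fun i => X - C (q (z i)))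
        (Finset.subset_univ _)
      rwa [Finset.prod_pair hi.symm, hq, ← sq] at this
    have hthree : ∀ i j k, π i ≠ i → π j ≠ j → π k ≠ k → i ≠ j → i ≠ k → j ≠ k → False := by
      intro i j k hi hj hk hij hik hjk
      apply not_cube_dvd_belyi_sub hm hl (q (θ t₀)) (q (z i)) ht0' hn'
      rw [hprod]
      have h1 : q (z j) = q (z i) := mul_left_cancel₀ hn' ((hres j hj).trans (hres i hi).symm)
      have h2 : q (z k) = q (z i) := mul_left_cancel₀ hn' ((hres k hk).trans (hres i hi).symm)
      have := Finset.prod_dvd_prod_of_subset {i, j, k} Finset.univ (fun i => X - C (q (z i)))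
        (Finset.subset_univ _)
      rw [Finset.prod_insert (by simp [hij, hik]), Finset.prod_pair hjk, h1, h2] at this
      convert this using 1
      ring
    obtain ⟨i, hi⟩ : ∃ i, π i ≠ i := by
      by_contra! h
      exact hπ (Equiv.ext h)
    refine ⟨i, π i, hi.symm, ?_⟩
    have hi2 : π (π i) ≠ π i := fun h => hi (π.injective h)
    have hi3 : π (π (π i)) ≠ π (π i) := fun h => hi2 (π.injective h)
    have hii : π (π i) = i := by
      by_contra h
      exact hthree i (π i) (π (π i)) hi hi2 hi3 hi.symm (Ne.symm h) hi2.symm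
    ext k
    by_cases hk : k = i
    · rw [hk, Equiv.swap_apply_left]
    by_cases hk' : k = π i
    · rw [hk', Equiv.swap_apply_right, hii]
    rw [Equiv.swap_apply_of_ne_of_ne hk hk']
    by_contra hkk
    exact hthree i (π i) k hi hi2 hkk hi.symm (Ne.symm hk) (Ne.symm hk')
end

/-! ### Nontrivial inertia at a ramified prime -/

section
variable {K : Type*} [Field K] [PerfectField K]

lemma perfect_residueField (t : K) [(Ideal.span {(X - C t : K[X])}).IsMaximal] :
    PerfectField (Ideal.span {(X - C t : K[X])}).ResidueField := by
  set p := Ideal.span {(X - C t : K[X])}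
  let e : K →+* p.ResidueField := (algebraMap (K[X] ⧸ p) p.ResidueField).comp
    ((Ideal.Quotient.mk p).comp C)
  have he : Function.Surjective e := by
    intro y
    obtain ⟨a, rfl⟩ := (Ideal.bijective_algebraMap_quotient_residueField p).2 y
    obtain ⟨b, rfl⟩ := (quotientSpanXSubCAlgEquiv t).symm.surjective a
    refine ⟨b, ?_⟩
    simp only [e, RingHom.comp_apply]
    congr 1
  let := e.toAlgebra
  have : Algebra.IsAlgebraic K p.ResidueField := ⟨fun y => by
    obtain ⟨b, rfl⟩ := he y
    exact isAlgebraic_algebraMap (A := p.ResidueField) b⟩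
  exact Algebra.IsAlgebraic.perfectField K

variable {L : Type*} [Field L] [Algebra (RatFunc K) L] [Algebra K[X] L]
  [IsScalarTower K[X] (RatFunc K) L] [IsGalois (RatFunc K) L] [FiniteDimensional (RatFunc K) L]

instance galSMulCommClass : SMulCommClass (L ≃ₐ[RatFunc K] L) K[X] L where
  smul_comm σ a x := by
    rw [Algebra.smul_def, Algebra.smul_def, smul_mul']
    congr 1
    rw [IsScalarTower.algebraMap_apply K[X] (RatFunc K) L]
    exact σ.commutes _

/-- The order of the inertia group is the ramification index, which is at least `2` as soon as
`T - t ∈ Q ^ 2`. -/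
theorem exists_inertia_ne_one (t : K) (Q : Ideal (integralClosure K[X] L)) [Q.IsPrime]
    [Q.LiesOver (Ideal.span {(X - C t : K[X])})]
    (h : algebraMap K[X] (integralClosure K[X] L) (X - C t) ∈ Q ^ 2) :
    ∃ σ ∈ Q.inertia (L ≃ₐ[RatFunc K] L), σ ≠ 1 := by
  set p := Ideal.span {(X - C t : K[X])} with hp
  have hXC : (X - C t : K[X]) ≠ 0 := X_sub_C_ne_zero t
  have hpmax : p.IsMaximal :=
    PrincipalIdealRing.isMaximal_of_irreducible (irreducible_X_sub_C t)
  have := perfect_residueField t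
  have := integralClosure.isFractionRing_of_finite_extension (A := K[X]) (RatFunc K) L
  have := integralClosure.isDedekindDomain K[X] (RatFunc K) L
  have : Module.Finite K[X] (integralClosure K[X] L) :=
    IsIntegralClosure.finite K[X] (RatFunc K) L (integralClosure K[X] L)
  have : IsGaloisGroup (L ≃ₐ[RatFunc K] L) K[X] (integralClosure K[X] L) :=
    IsGaloisGroup.of_isFractionRing _ _ _ (RatFunc K) L
  have hinj : Function.Injective (algebraMap K[X] (integralClosure K[X] L)) := by
    have h1 : Function.Injective (algebraMap K[X] L) := by
      rw [IsScalarTower.algebraMap_eq K[X] (RatFunc K) L]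
      exact (algebraMap (RatFunc K) L).injective.comp (RatFunc.algebraMap_injective K)
    exact fun a b hab => h1 (congrArg (algebraMap (integralClosure K[X] L) L) hab)
  have hfaith : FaithfulSMul K[X] (integralClosure K[X] L) :=
    (faithfulSMul_iff_algebraMap_injective _ _).2 hinj
  have htf : Module.IsTorsionFree K[X] (integralClosure K[X] L) := inferInstance
  have hcard := Ideal.card_inertia_eq_ramificationIdxIn (G := (L ≃ₐ[RatFunc K] L)) p Q
  have hmap : p.map (algebraMap K[X] (integralClosure K[X] L)) = Ideal.span
      {algebraMap K[X] (integralClosure K[X] L) (X - C t)} := by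
    rw [hp, Ideal.map_span, Set.image_singleton]
  have hmap0 : p.map (algebraMap K[X] (integralClosure K[X] L)) ≠ ⊥ := by
    rw [hmap, Ne, Ideal.span_singleton_eq_bot]
    intro h0
    exact hXC (hinj (h0.trans (map_zero _).symm))
  rw [Ideal.ramificationIdxIn_eq_ramificationIdx p Q (L ≃ₐ[RatFunc K] L),
    Ideal.IsDedekindDomain.ramificationIdx_eq_multiplicity p Q hmap0] at hcard
  have h2 : 2 ≤ Nat.card (Q.inertia (L ≃ₐ[RatFunc K] L)) := by
    rw [hcard]
    have hfin : FiniteMultiplicity Q (p.map (algebraMap K[X] (integralClosure K[X] L))) := by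
      refine FiniteMultiplicity.of_not_isUnit ?_ hmap0
      rw [Ideal.isUnit_iff]
      exact Ideal.IsPrime.ne_top'
    apply hfin.le_multiplicity_of_pow_dvd
    rw [Ideal.dvd_iff_le, hmap, Ideal.span_singleton_le_iff_mem]
    exact h
  have h3 : Nontrivial (Q.inertia (L ≃ₐ[RatFunc K] L)) := by
    rw [← Finite.one_lt_card_iff_nontrivial]; omega
  obtain ⟨σ, hσ⟩ := exists_ne (1 : Q.inertia (L ≃ₐ[RatFunc K] L))
  exact ⟨σ, σ.2, fun h => hσ (Subtype.ext h)⟩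

end

/-! ### The Galois group over `K(T)` is the full symmetric group -/

lemma map_eq_prod_rootSet {F L : Type*} [Field F] [Field L] [Algebra F L] (f : F[X])
    (hf : f.Monic) (hs : f.Separable) (hsp : (f.map (algebraMap F L)).Splits) [Fintype (f.rootSet L)] :
    f.map (algebraMap F L) = ∏ x : f.rootSet L, (X - C (x : L)) := by
  classical
  have h1 := hsp.eq_prod_roots_of_monic (hf.map _)
  have hnd : (f.map (algebraMap F L)).roots.Nodup := nodup_roots hs.map
  have h2 : (f.rootSet L).toFinset = (f.map (algebraMap F L)).roots.toFinset := by
    ext x; rw [Set.mem_toFinset, rootSet, Finset.mem_coe]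
  rw [Finset.prod_set_coe (f := fun x => X - C x) (f.rootSet L), h2]
  change _ = (Multiset.map (fun x => X - C x) (f.map (algebraMap F L)).roots.dedup).prod
  rw [hnd.dedup]
  exact h1

section
variable {K : Type*} [Field K] [PerfectField K]
variable {L : Type*} [Field L] [Algebra K L] [Algebra (RatFunc K) L] [IsScalarTower K (RatFunc K) L]

/-- Every permutation of the roots of the family is induced by the Galois group over `K(T)`: the group
is primitive and contains a transposition, given by inertia over the critical value. -/
theorem famF_galois_full {m l : ℕ} (hm : 0 < m) (hl : 0 < l) (hml : m.Coprime l)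
    (hm0 : (m : K) ≠ 0) (hl0 : (l : K) ≠ 0) (hn : ((m + l : ℕ) : K) ≠ 0)
    [IsSplittingField (RatFunc K) L (famF K m l)] (π : Equiv.Perm ((famF K m l).rootSet L)) :
    ∃ σ : L ≃ₐ[RatFunc K] L, ∀ x : (famF K m l).rootSet L, σ x = π x := by
  classical
  have := IsGalois.of_separable_splitting_field (F := RatFunc K) (E := L) (famF_separable hm l hn)
  have : FiniteDimensional (RatFunc K) L :=
    IsSplittingField.finiteDimensional L (famF K m l)
  let : Algebra K[X] L := ((algebraMap (RatFunc K) L).comp (algebraMap K[X] (RatFunc K))).toAlgebra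
  have : IsScalarTower K[X] (RatFunc K) L := IsScalarTower.of_algebraMap_eq' rfl
  let ι := (famF K m l).rootSet L
  let G := L ≃ₐ[RatFunc K] L
  have hspl := IsSplittingField.splits L (famF K m l)
  have hprod := map_eq_prod_rootSet (L := L) (famF K m l) (famF_monic hm l) (famF_separable hm l hn) hspl
  have hcard : Fintype.card ι = m + l := by
    have := congrArg natDegree hprod
    rw [natDegree_map, famF_natDegree hm, natDegree_finsetProd_X_sub_C_eq_card] at this
    simpa using this.symm
  have : Nontrivial ι := Fintype.one_lt_card_iff_nontrivial.1 (by omega)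
  let B := integralClosure K[X] L
  let z : ι → B := fun x => ⟨x, ⟨fam K m l, fam_monic hm l, by
    have := aeval_eq_zero_of_mem_rootSet x.2
    rw [famF, aeval_map_algebraMap] at this
    exact this⟩⟩
  have hz : (fam K m l).map (algebraMap K[X] B) = ∏ i, (X - C (z i)) := by
    apply map_injective (algebraMap B L) Subtype.val_injective
    rw [Polynomial.map_map, Polynomial.map_prod]
    rw [famF, Polynomial.map_map] at hprod
    simp only [Polynomial.map_sub, map_X, map_C]
    exact hprod
  set t := (belyi K m l).eval ((m : K) / (m + l : ℕ)) with ht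
  set p := Ideal.span {(X - C t : K[X])} with hp
  have hpmax : p.IsMaximal :=
    PrincipalIdealRing.isMaximal_of_irreducible (irreducible_X_sub_C t)
  have hinj : Function.Injective (algebraMap K[X] B) := by
    have h1 : Function.Injective (algebraMap K[X] L) :=
      (algebraMap (RatFunc K) L).injective.comp (RatFunc.algebraMap_injective K)
    exact fun a b hab => h1 (congrArg (algebraMap B L) hab)
  have hfaith : FaithfulSMul K[X] B := (faithfulSMul_iff_algebraMap_injective _ _).2 hinj
  obtain ⟨Q, hQ, hQp⟩ := Ideal.nonempty_primesOver (S := B) p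
  have hmem : algebraMap K[X] B (X - C t) ∈ Q := by
    have : (X - C t) ∈ Q.under K[X] := by
      rw [← hQp.over]; exact Ideal.mem_span_singleton_self _
    exact this
  obtain ⟨h1, h2⟩ := local_analysis hm hl hm0 hl0 hn (algebraMap K[X] B) Q z hz hmem
  obtain ⟨σ, hσ, hσ1⟩ := exists_inertia_ne_one t Q h1
  have hswap : (MulAction.toPermHom G ι σ).IsSwap := by
    apply h2
    · intro h
      apply hσ1
      have hadj : IntermediateField.adjoin (RatFunc K) ((famF K m l).rootSet L) = ⊤ := by
        rw [← top_le_iff, SetLike.le_def]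
        intro x _
        apply algebra_adjoin_le_adjoin
        rw [IsSplittingField.adjoin_rootSet L (famF K m l)]
        trivial
      ext x
      have hx : x ∈ IntermediateField.adjoin (RatFunc K) ((famF K m l).rootSet L) := by
        rw [hadj]; trivial
      induction hx using adjoin_induction with
      | mem x hx =>
        exact congrArg Subtype.val (Equiv.congr_fun h (⟨x, hx⟩ : ι))
      | algebraMap x => exact σ.commutes x
      | add x y _ _ hx hy => rw [map_add, hx, hy]; rfl
      | inv x _ hx => rw [map_inv₀, hx]; rfl
      | mul x y _ _ hx hy => rw [map_mul, hx, hy]; rfl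
    · intro i
      exact hσ (z i)
  have hprim := famF_preprimitive (K := K) (L := L) hm hl hml
  have hprim' : MulAction.IsPreprimitive (MulAction.toPermHom G ι).range ι := by
    let f : ι →ₑ[(MulAction.toPermHom G ι).rangeRestrict] ι :=
      { toFun := id, map_smul' := fun _ _ => rfl }
    exact MulAction.IsPreprimitive.of_surjective (f := f) Function.surjective_id
  have htop := Equiv.Perm.subgroup_eq_top_of_isPreprimitive_of_isSwap_mem hprim' _ hswap ⟨σ, rfl⟩
  have hπ : π ∈ (MulAction.toPermHom G ι).range := by rw [htop]; trivial
  obtain ⟨τ, hτ⟩ := hπ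
  refine ⟨τ, fun x => ?_⟩
  rw [← hτ]
  rfl
end

/-! ### Resolvents and their descent -/

/-- The Lagrange resolvent polynomial `∏_π (X - ∑ i, a i * z (π i))`, the product being over all
permutations `π` of the index type. -/
noncomputable def lagr {ι R : Type*} [Fintype ι] [DecidableEq ι] [CommRing R] (a z : ι → R) : R[X] :=
  ∏ π : Equiv.Perm ι, (X - C (∑ i, a i * z (π i)))

section
variable {ι R S : Type*} [Fintype ι] [DecidableEq ι] [CommRing R] [CommRing S]

lemma lagr_map (φ : R →+* S) (a z : ι → R) :
    (lagr a z).map φ = lagr (fun i => φ (a i)) (fun i => φ (z i)) := by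
  simp [lagr, Polynomial.map_prod, Polynomial.map_sum]

lemma lagr_monic (a z : ι → R) : (lagr a z).Monic := monic_prod_X_sub_C _ _

lemma lagr_perm_right (a z : ι → R) (e : Equiv.Perm ι) : lagr a (fun i => z (e i)) = lagr a z :=
  Fintype.prod_equiv (Equiv.mulLeft e) _ _ fun π => by simp

lemma lagr_perm_left (a z : ι → R) (e : Equiv.Perm ι) : lagr (fun i => a (e i)) z = lagr a z := by
  refine Fintype.prod_equiv (Equiv.mulRight e⁻¹) _ _ fun π => ?_
  congr 2
  exact Fintype.sum_equiv e _ _ fun i => by simp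

/-- If the weights `a` are permuted by the Galois group, the resolvent of `a` and the roots of a
polynomial `h` over `k[T]` has coefficients in `k[T]`, compatibly with every specialization. -/
theorem exists_resolvent {k : Type*} {Ω : Type*} [Field k] [Field Ω] [Algebra k Ω] [IsGalois k Ω]
    (a : ι → Ω) (ha : ∀ τ : Ω ≃ₐ[k] Ω, ∃ ρ : Equiv.Perm ι, ∀ i, τ (a i) = a (ρ i))
    (h : k[X][X]) :
    ∃ P : k[X][X], ∀ (R : Type*) [CommRing R] (θ : Ω →+* R) (φ : k[X] →+* R) (z : ι → R),
      φ.comp C = θ.comp (algebraMap k Ω) → h.map φ = ∏ i, (X - C (z i)) →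
      P.map φ = lagr (fun i => θ (a i)) z := by
  -- the generic resolvent, with indeterminates in place of the roots of `h`
  let F : (MvPolynomial ι Ω)[X] := lagr (fun i => MvPolynomial.C (a i)) MvPolynomial.X
  have hτ : ∀ τ : Ω ≃ₐ[k] Ω, F.map (MvPolynomial.map (τ : Ω →+* Ω)) = F := by
    intro τ
    obtain ⟨ρ, hρ⟩ := ha τ
    simp only [F, lagr_map, MvPolynomial.map_C, MvPolynomial.map_X]
    rw [← lagr_perm_left (fun i => MvPolynomial.C (a i)) _ ρ]
    congr 1
    funext i
    exact congrArg _ (hρ i)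
  obtain ⟨F0, hF0⟩ : F ∈ lifts (MvPolynomial.map (algebraMap k Ω)) := by
    rw [lifts_iff_coeff_lifts]
    intro j
    rw [MvPolynomial.mem_range_map_iff_coeffs_subset]
    intro x hx
    obtain ⟨d, -, rfl⟩ := MvPolynomial.mem_coeffs_iff.1 hx
    rw [InfiniteGalois.mem_range_algebraMap_iff_fixed]
    intro τ
    conv_rhs => rw [← hτ τ]
    rw [coeff_map, MvPolynomial.coeff_map]
    rfl
  change F0.map _ = F at hF0
  have hinj : Function.Injective (Polynomial.map (MvPolynomial.map (σ := ι) (algebraMap k Ω))) :=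
    Polynomial.map_injective _ (MvPolynomial.map_injective _ (algebraMap k Ω).injective)
  -- the coefficients are symmetric, so they are polynomials in the elementary symmetric ones
  set n := Fintype.card ι with hn
  let es : MvPolynomial (Fin n) k →ₐ[k] MvPolynomial ι k :=
    (MvPolynomial.symmetricSubalgebra ι k).val.comp (MvPolynomial.esymmAlgHom ι k n)
  obtain ⟨P0, hP0⟩ : F0 ∈ lifts (es : MvPolynomial (Fin n) k →+* MvPolynomial ι k) := by
    rw [lifts_iff_coeff_lifts]
    intro j
    have hsym : (F0.coeff j).IsSymmetric := by
      intro e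
      have h1 : F0.map ((MvPolynomial.rename e : MvPolynomial ι k →ₐ[k] _) :
          MvPolynomial ι k →+* MvPolynomial ι k) = F0 := by
        apply hinj
        simp only [Polynomial.map_map]
        have : (MvPolynomial.map (algebraMap k Ω)).comp
            ((MvPolynomial.rename e : MvPolynomial ι k →ₐ[k] _) :
              MvPolynomial ι k →+* MvPolynomial ι k) =
            ((MvPolynomial.rename e : MvPolynomial ι Ω →ₐ[Ω] _) :
              MvPolynomial ι Ω →+* MvPolynomial ι Ω).comp (MvPolynomial.map (algebraMap k Ω)) := by
          apply MvPolynomial.ringHom_ext <;> intro i <;> simp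
        rw [this, ← Polynomial.map_map, hF0]
        simp only [F, lagr_map]
        conv_rhs => rw [← lagr_perm_right _ _ e]
        simp
      conv_rhs => rw [← h1]
      rw [coeff_map]; rfl
    obtain ⟨q, hq⟩ := MvPolynomial.esymmAlgHom_surjective (σ := ι) k hn.symm.le ⟨F0.coeff j, hsym⟩
    exact ⟨q, congrArg Subtype.val hq⟩
  change P0.map _ = F0 at hP0
  refine ⟨P0.map (MvPolynomial.aeval (R := k)
    fun i : Fin n => (-1) ^ (i.1 + 1) * h.coeff (n - (i.1 + 1))).toRingHom, ?_⟩
  intro R _ θ φ z hθ hz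
  have hF : F.map (MvPolynomial.eval₂Hom θ z) = lagr (fun i => θ (a i)) z := by
    simp [F, lagr_map]
  rw [← hF, ← hF0, ← hP0, Polynomial.map_map, Polynomial.map_map, Polynomial.map_map]
  congr 1
  apply MvPolynomial.ringHom_ext
  · intro x
    have := RingHom.congr_fun hθ x
    simpa [es] using this
  · intro i
    have hi : i.1 + 1 ≤ n := i.2
    have h1 : φ (h.coeff (n - (i.1 + 1))) = (-1) ^ (i.1 + 1) * (Finset.univ.val.map z).esymm (i.1 + 1) := by
      rw [← coeff_map, hz]
      have := Multiset.prod_X_sub_C_coeff (Finset.univ.val.map z) (k := n - (i.1 + 1)) (by simp [hn])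
      simp only [Multiset.map_map, Multiset.card_map, Finset.card_val, Finset.card_univ, ← hn] at this
      rw [Nat.sub_sub_self hi] at this
      exact this
    let : Algebra k R := (φ.comp C).toAlgebra
    have h2 : MvPolynomial.eval₂Hom (φ.comp C) z (MvPolynomial.esymm ι k (i.1 + 1)) =
        (Finset.univ.val.map z).esymm (i.1 + 1) :=
      MvPolynomial.aeval_esymm_eq_multiset_esymm (R := k) (S := R) ι (i.1 + 1) z
    have h3 : (MvPolynomial.eval₂Hom θ z).comp (MvPolynomial.map (algebraMap k Ω)) =
        MvPolynomial.eval₂Hom (φ.comp C) z := by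
      rw [hθ]
      apply MvPolynomial.ringHom_ext <;> intro i <;> simp
    rw [h3]
    simp only [RingHom.comp_apply, AlgHom.toRingHom_eq_coe, RingHom.coe_coe, MvPolynomial.aeval_X, map_mul, map_pow, map_neg, map_one, h1]
    have h4 : es (MvPolynomial.X i) = MvPolynomial.esymm ι k (i.1 + 1) := by
      simp [es, MvPolynomial.esymmAlgHom_apply]
    rw [h4, h2, ← mul_assoc, ← mul_pow]
    simp
end

/-! ### Choice of the weights and irreducibility of the resolvent -/

/-- There is `c ∈ E` whose conjugates give pairwise distinct resolvent values: by the linear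
independence of characters each coincidence cuts out a proper `k`-subspace of `E`. -/
theorem exists_weight {k E Ω L : Type*} [Field k] [Field E] [Field Ω] [Field L] [Algebra k E]
    [Algebra k Ω] [Infinite k] [Fintype (E →ₐ[k] Ω)] (θ : Ω →+* L) (z : (E →ₐ[k] Ω) → L)
    (hz : Function.Injective z) :
    ∃ c : E, Function.Injective fun π : Equiv.Perm (E →ₐ[k] Ω) => ∑ i, θ (i c) * z (π i) := by
  classical
  let : Algebra k L := (θ.comp (algebraMap k Ω)).toAlgebra
  let θ' : Ω →ₐ[k] L := { θ with commutes' := fun _ => rfl }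
  let f (q : Equiv.Perm (E →ₐ[k] Ω) × Equiv.Perm (E →ₐ[k] Ω)) : E →ₗ[k] L :=
    ∑ i, (LinearMap.mulRight k (z (q.1 i) - z (q.2 i))) ∘ₗ (θ'.comp i).toLinearMap
  have hf (q c) : f q c = ∑ i, θ (i c) * (z (q.1 i) - z (q.2 i)) := by
    simp [f, θ']
  let p (q : {q : Equiv.Perm (E →ₐ[k] Ω) × Equiv.Perm (E →ₐ[k] Ω) // q.1 ≠ q.2}) :
    Subspace k E := LinearMap.ker (f q.1)
  have hp : (⋃ q, (p q : Set E)) ≠ Set.univ := by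
    intro h
    obtain ⟨⟨q, hq⟩, h⟩ := Subspace.exists_eq_top_of_iUnion_eq_univ h
    apply hq
    have hli := linearIndependent_monoidHom E L
    let χ : (E →ₐ[k] Ω) → (E →* L) := fun i => (θ.comp (i : E →+* Ω) : E →* L)
    have hχ : Function.Injective χ := by
      intro i j hij
      ext x
      exact θ.injective (DFunLike.congr_fun hij x)
    have := Fintype.linearIndependent_iff.1 (hli.comp χ hχ) (fun i => z (q.1 i) - z (q.2 i)) (by
      funext c
      have h1 : c ∈ p ⟨q, hq⟩ := by rw [h]; trivial
      have h2 : f q c = 0 := h1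
      rw [hf] at h2
      simpa [χ, mul_comm] using h2)
    ext1 i
    exact hz (sub_eq_zero.1 (this i))
  obtain ⟨c, hc⟩ := (Set.ne_univ_iff_exists_notMem _).1 hp
  refine ⟨c, fun π π' h => by_contra fun hne => hc ?_⟩
  refine Set.mem_iUnion.2 ⟨⟨(π, π'), hne⟩, ?_⟩
  change f (π, π') c = 0
  rw [hf]
  simp only [mul_sub, Finset.sum_sub_distrib]
  exact sub_eq_zero.2 h

/-- A full symmetric Galois group makes a resolvent with distinct roots irreducible. -/
theorem irreducible_of_lagr {F L ι : Type*} [Field F] [Field L] [Algebra F L] [Fintype ι]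
    [DecidableEq ι] (a z : ι → L) (hinj : Function.Injective fun π : Equiv.Perm ι => ∑ i, a i * z (π i))
    (hG : ∀ π : Equiv.Perm ι, ∃ σ : L ≃ₐ[F] L, ∀ i, σ (a i) = a i ∧ σ (z i) = z (π i))
    (P : F[X]) (hP : P.map (algebraMap F L) = lagr a z) : Irreducible P := by
  let w (π : Equiv.Perm ι) : L := ∑ i, a i * z (π i)
  have hmon : P.Monic := monic_of_injective (algebraMap F L).injective (by rw [hP]; exact lagr_monic a z)
  have hroot (π) : aeval (w π) P = 0 := by
    rw [aeval_def, eval₂_eq_eval_map, hP, lagr, eval_prod]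
    exact Finset.prod_eq_zero (Finset.mem_univ π) (by rw [eval_sub, eval_X, eval_C, sub_self])
  have h_int : IsIntegral F (w 1) := ⟨P, hmon, hroot 1⟩
  have hdvd : minpoly F (w 1) ∣ P := minpoly.dvd _ _ (hroot 1)
  have hdvd' : lagr a z ∣ (minpoly F (w 1)).map (algebraMap F L) := by
    apply Finset.prod_dvd_of_coprime
    · intro π _ π' _ hne
      exact isCoprime_X_sub_C_of_isUnit_sub (sub_ne_zero.2 fun h => hne (hinj h)).isUnit
    · intro π _
      rw [dvd_iff_isRoot, IsRoot.def, eval_map_algebraMap]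
      obtain ⟨σ, hσ⟩ := hG π
      have : σ (w 1) = w π := by simp [w, hσ]
      change aeval (w π) _ = 0
      rw [← this, aeval_algHom_apply, minpoly.aeval, map_zero]
  rw [← hP, map_dvd_map' ] at hdvd'
  rw [eq_of_monic_of_associated hmon (minpoly.monic h_int) (associated_of_dvd_dvd hdvd' hdvd)]
  exact minpoly.irreducible h_int

/-! ### The resolvent of the generic fibre -/

lemma lagr_separable {L ι : Type*} [Field L] [Fintype ι] [DecidableEq ι] (a z : ι → L)
    (hinj : Function.Injective fun π : Equiv.Perm ι => ∑ i, a i * z (π i)) :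
    (lagr a z).Separable := by
  unfold lagr
  rw [separable_prod_X_sub_C_iff]
  exact hinj

/-- Generic separability persists outside the zeros of the discriminant. -/
lemma exists_discr {k L : Type*} [Field k] [Field L] (φ : k[X] →+* L) (hφ : Function.Injective φ)
    (P : k[X][X]) (hd : P.natDegree ≠ 0) (hP : (P.map φ).Separable) :
    ∃ D : k[X], D ≠ 0 ∧ ∀ t, D.eval t ≠ 0 → (P.map (evalRingHom t)).Separable := by
  refine ⟨P.resultant (derivative P), ?_, ?_⟩
  · have h := resultant_ne_zero _ _ hP
    rw [derivative_map, natDegree_map_eq_of_injective hφ, natDegree_map_eq_of_injective hφ,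
      resultant_map_map] at h
    exact fun h0 => h (by rw [h0, map_zero])
  · intro t ht
    obtain ⟨p, q, -, -, e⟩ := exists_mul_add_mul_eq_C_resultant P (derivative P) le_rfl le_rfl
      (Or.inl hd)
    have := congrArg (Polynomial.map (evalRingHom t)) e
    rw [Polynomial.map_add, Polynomial.map_mul, Polynomial.map_mul, map_C, ← derivative_map] at this
    rw [Separable]
    set d := (evalRingHom t) (P.resultant (derivative P))
    have hd : d ≠ 0 := ht
    refine ⟨C d⁻¹ * p.map (evalRingHom t), C d⁻¹ * q.map (evalRingHom t), ?_⟩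
    rw [mul_assoc, mul_assoc, ← mul_add, mul_comm (p.map _), mul_comm (q.map _), this, ← C_mul,
      inv_mul_cancel₀ hd, C_1]

universe u v
/-- For suitable `c ∈ E`, the resolvent of the conjugates of `c` and the roots of the family is a monic
polynomial over `k[T]` that stays irreducible over `K` and is separable at all but finitely many
specializations of `T`. The field `K` will be an algebraic closure of `k`, and `Ω` a separable one. -/
theorem exists_good_resolvent {k Ω K : Type u} {E : Type v} [Field k] [Field Ω] [Field K] [Field E]
    [Algebra k Ω] [Algebra k K] [Algebra k E] [IsGalois k Ω] [PerfectField K] [Infinite k]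
    [Fintype (E →ₐ[k] Ω)] [DecidableEq (E →ₐ[k] Ω)] (θ₀ : Ω →ₐ[k] K) {m l : ℕ} (hm : 0 < m) (hl : 0 < l)
    (hml : m.Coprime l) (hm0 : (m : K) ≠ 0) (hl0 : (l : K) ≠ 0) (hn : ((m + l : ℕ) : K) ≠ 0)
    (hcard : Fintype.card (E →ₐ[k] Ω) = m + l) :
    ∃ (c : E) (P : k[X][X]), P.Monic ∧ Irreducible (P.map (mapRingHom (algebraMap k K))) ∧
      (∃ D : k[X], D ≠ 0 ∧ ∀ t, D.eval t ≠ 0 → (P.map (evalRingHom t)).Separable) ∧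
      ∀ (R : Type u) [CommRing R] (θ : Ω →+* R) (φ : k[X] →+* R) (z : (E →ₐ[k] Ω) → R),
        φ.comp C = θ.comp (algebraMap k Ω) → (fam k m l).map φ = ∏ i, (X - C (z i)) →
        P.map φ = lagr (fun i => θ (i c)) z := by
  classical
  let L := (famF K m l).SplittingField
  have hspl := IsSplittingField.splits L (famF K m l)
  have hprod := map_eq_prod_rootSet (L := L) (famF K m l) (famF_monic hm l) (famF_separable hm l hn) hspl
  have hcardL : Fintype.card ((famF K m l).rootSet L) = m + l := by
    have := congrArg natDegree hprod
    rw [natDegree_map, famF_natDegree hm, natDegree_finsetProd_X_sub_C_eq_card] at this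
    simpa using this.symm
  let e : (E →ₐ[k] Ω) ≃ (famF K m l).rootSet L := Fintype.equivOfCardEq (hcard.trans hcardL.symm)
  let z : (E →ₐ[k] Ω) → L := fun i => e i
  have hz : Function.Injective z := Subtype.val_injective.comp e.injective
  let θ : Ω →+* L := (algebraMap K L).comp (θ₀ : Ω →+* K)
  obtain ⟨c, hc⟩ := exists_weight (E := E) (k := k) θ z hz
  obtain ⟨P, hP⟩ := exists_resolvent (k := k) (Ω := Ω) (fun i : E →ₐ[k] Ω => i c) (fun τ =>
    ⟨⟨fun i => (τ : Ω →ₐ[k] Ω).comp i, fun i => (τ.symm : Ω →ₐ[k] Ω).comp i,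
      fun i => by ext; simp, fun i => by ext; simp⟩, fun i => rfl⟩) (fam k m l)
  let φ₁ : k[X] →+* RatFunc K := (algebraMap K[X] (RatFunc K)).comp (mapRingHom (algebraMap k K))
  let φ : k[X] →+* L := (algebraMap (RatFunc K) L).comp φ₁
  have hφ : Function.Injective φ :=
    (algebraMap (RatFunc K) L).injective.comp ((RatFunc.algebraMap_injective K).comp
      (Polynomial.map_injective _ (algebraMap k K).injective))
  have hPL : P.map φ = lagr (fun i => θ (i c)) z := by
    apply hP L θ φ z
    · ext x
      simp only [φ, φ₁, θ, RingHom.comp_apply, coe_mapRingHom, map_C, RingHom.coe_coe, AlgHom.commutes]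
      rw [IsScalarTower.algebraMap_apply K (RatFunc K) L]
      rfl
    · have h1 : (fam k m l).map φ = (famF K m l).map (algebraMap (RatFunc K) L) := by
        have h2 : (famF K m l).map (algebraMap (RatFunc K) L) = (fam K m l).map
            ((algebraMap (RatFunc K) L).comp (algebraMap K[X] (RatFunc K))) := Polynomial.map_map _ _ _
        rw [h2, fam_map, fam_map]
        simp [φ, φ₁]
      rw [h1, hprod]
      exact (Fintype.prod_equiv e _ _ fun i => rfl).symm
  have hmon : P.Monic := monic_of_injective hφ (by rw [hPL]; exact lagr_monic _ _)
  have hirr : Irreducible (P.map φ₁) := by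
    apply irreducible_of_lagr (L := L) _ _ hc
    · intro π
      obtain ⟨σ, hσ⟩ := famF_galois_full (K := K) (L := L) hm hl hml hm0 hl0 hn ((e.symm.trans π).trans e)
      refine ⟨σ, fun i => ⟨?_, ?_⟩⟩
      · simp only [θ, RingHom.comp_apply]
        rw [IsScalarTower.algebraMap_apply K (RatFunc K) L, σ.commutes]
      · have := hσ (e i)
        simpa [z] using this
    · rw [Polynomial.map_map]; exact hPL
  refine ⟨c, P, hmon, ?_, ?_, hP⟩
  · rw [← Polynomial.map_map] at hirr
    exact ((hmon.map _).irreducible_iff_irreducible_map_fraction_map).2 hirr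
  · refine exists_discr φ hφ P ?_ (by rw [hPL]; exact lagr_separable _ _ hc)
    rw [← hmon.natDegree_map φ₁]
    exact hirr.natDegree_pos.ne'

/-! ### Points over PAC fields -/

lemma IsPAC.infinite {k : Type*} [Field k] (h : IsPAC k) : Infinite k := by
  by_contra hf
  rw [not_infinite_iff_finite] at hf
  refine h (MvPolynomial.X 0) ?_ (Set.toFinite _)
  rw [MvPolynomial.map_X]
  exact MvPolynomial.X_prime.irreducible

lemma equivMvPolynomial_map {R S : Type*} [CommRing R] [CommRing S] (φ : R →+* S) (P : R[X][X]) :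
    MvPolynomial.map φ (Bivariate.equivMvPolynomial R P) =
      Bivariate.equivMvPolynomial S (P.map (mapRingHom φ)) := by
  have : (MvPolynomial.map φ).comp (Bivariate.equivMvPolynomial R : R[X][X] →+* MvPolynomial (Fin 2) R) =
      (Bivariate.equivMvPolynomial S : S[X][X] →+* MvPolynomial (Fin 2) S).comp
        (mapRingHom (mapRingHom φ)) := by
    ext <;> simp
  exact RingHom.congr_fun this P

lemma eval_equivMvPolynomial {R : Type*} [CommRing R] (t x : R) (P : R[X][X]) :
    MvPolynomial.eval ![t, x] (Bivariate.equivMvPolynomial R P) =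
      (P.map (evalRingHom t)).eval x := by
  have : (MvPolynomial.eval ![t, x]).comp
      (Bivariate.equivMvPolynomial R : R[X][X] →+* MvPolynomial (Fin 2) R) =
      (evalRingHom x).comp (mapRingHom (evalRingHom t)) := by
    ext <;> simp
  exact RingHom.congr_fun this P

/-- On a curve that is monic in the second coordinate, a PAC field provides points whose first
coordinate avoids any given finite set. -/
lemma IsPAC.exists_point {k : Type*} [Field k] (h : IsPAC k) (P : k[X][X]) (hP : P.Monic)
    (hirr : Irreducible (P.map (mapRingHom (algebraMap k (AlgebraicClosure k)))))
    (D : k[X]) (hD : D ≠ 0) :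
    ∃ t x, D.eval t ≠ 0 ∧ (P.map (evalRingHom t)).eval x = 0 := by
  by_contra! hcon
  refine h (Bivariate.equivMvPolynomial k P) ?_ ?_
  · rw [equivMvPolynomial_map, MulEquiv.irreducible_iff]
    exact hirr
  · have hfin : (⋃ t ∈ D.rootSet k, Set.image (fun x => (t, x)) ((P.map (evalRingHom t)).rootSet k)).Finite :=
      (rootSet_finite D k).biUnion fun t _ => (rootSet_finite _ k).image _
    refine hfin.subset ?_
    rintro ⟨t, x⟩ hx
    change MvPolynomial.eval ![t, x] _ = 0 at hx
    rw [eval_equivMvPolynomial] at hx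
    simp only [Set.mem_iUnion]
    refine ⟨t, ?_, x, ?_, rfl⟩
    · rw [mem_rootSet_of_ne hD]
      by_contra ht
      exact hcon t x (by simpa using ht) hx
    · rw [mem_rootSet_of_ne (hP.map _).ne_zero]
      simpa using hx

/-! ### Recovering `E` from a rational simple root of the resolvent -/

lemma exists_eq_prod_of_splits {F ι : Type*} [Field F] [Fintype ι] (f : F[X]) (hf : f.Monic)
    (hs : f.Splits) (hd : f.natDegree = Fintype.card ι) :
    ∃ z : ι → F, f = ∏ i, (X - C (z i)) := by
  have h1 : f.roots.card = Fintype.card ι := by rw [← hd, hs.natDegree_eq_card_roots]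
  obtain ⟨l, hl⟩ : ∃ l : List F, (l : Multiset F) = f.roots := Quot.exists_rep _
  have h2 : l.length = Fintype.card ι := by rw [← h1, ← hl]; rfl
  let e : ι ≃ Fin l.length := Fintype.equivFinOfCardEq h2.symm
  refine ⟨fun i => l.get (e i), ?_⟩
  conv_lhs => rw [hs.eq_prod_roots_of_monic hf, ← hl]
  rw [Fintype.prod_equiv e _ (fun j => X - C (l.get j)) fun i => rfl]
  rw [Multiset.map_coe, Multiset.prod_coe, ← List.prod_ofFn]
  congr 1
  conv_lhs => rw [← List.ofFn_get l, List.map_ofFn]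
  rfl

/-- The `z i` are distinct because exchanging two equal ones would not change the resolvent value. -/
lemma injective_of_lagr_separable {F ι : Type*} [Field F] [Fintype ι] [DecidableEq ι] (a z : ι → F)
    (h : (lagr a z).Separable) :
    (Function.Injective fun π : Equiv.Perm ι => ∑ i, a i * z (π i)) ∧ Function.Injective z := by
  unfold lagr at h
  rw [separable_prod_X_sub_C_iff] at h
  refine ⟨h, fun i j hij => by_contra fun hne => ?_⟩
  have : Equiv.swap i j = 1 := by
    apply h
    refine Finset.sum_congr rfl fun x _ => ?_
    congr 1
    by_cases hx : x = i
    · subst hx; simp [hij]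
    · by_cases hx' : x = j
      · subst hx'; simp [hij]
      · rw [Equiv.swap_apply_of_ne_of_ne hx hx']; rfl
  exact hne (Equiv.swap_eq_one_iff.1 this)

/-- If a rational value `x` of the resolvent is a simple root, then the Galois group permutes the
roots `y` of `h` exactly as it permutes the embeddings of `E`. -/
lemma galois_compat {k E Ω : Type*} [Field k] [Field E] [Field Ω] [Algebra k E] [Algebra k Ω]
    [Fintype (E →ₐ[k] Ω)] [DecidableEq (E →ₐ[k] Ω)] (h : k[X]) (c : E) (x : k)
    (y : (E →ₐ[k] Ω) → Ω) (hy : h.map (algebraMap k Ω) = ∏ i, (X - C (y i)))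
    (hyi : Function.Injective y)
    (hinj : Function.Injective fun π : Equiv.Perm (E →ₐ[k] Ω) => ∑ i, i c * y (π i))
    (hx : algebraMap k Ω x = ∑ i, i c * y i) (τ : Ω ≃ₐ[k] Ω) (i : E →ₐ[k] Ω) :
    τ (y i) = y ((τ : Ω →ₐ[k] Ω).comp i) := by
  have hroot (w : Ω) : aeval w h = 0 ↔ ∃ j, y j = w := by
    rw [aeval_def, eval₂_eq_eval_map, hy, eval_prod, Finset.prod_eq_zero_iff]
    simp [sub_eq_zero, eq_comm]
  have h1 (i) : ∃ j, y j = τ (y i) := by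
    rw [← hroot, aeval_algHom_apply, (hroot _).2 ⟨i, rfl⟩, map_zero]
  choose ρ hρ using h1
  have hρi : Function.Injective ρ := by
    intro i j hij
    apply hyi; apply τ.injective
    rw [← hρ, ← hρ, hij]
  let ρ' := Equiv.ofBijective ρ (Finite.injective_iff_bijective.1 hρi)
  let T : Equiv.Perm (E →ₐ[k] Ω) :=
    ⟨fun i => (τ : Ω →ₐ[k] Ω).comp i, fun i => (τ.symm : Ω →ₐ[k] Ω).comp i,
      fun i => by ext; simp, fun i => by ext; simp⟩
  have h2 : T⁻¹.trans ρ' = 1 := by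
    apply hinj
    change ∑ i, i c * y (ρ (T⁻¹ i)) = ∑ i, i c * y i
    rw [← hx, ← τ.commutes x, hx, map_sum]
    refine (Fintype.sum_equiv T _ _ fun i => ?_).symm
    have hT : T⁻¹ (T i) = i := T.symm_apply_apply i
    rw [hT, hρ, map_mul]
    rfl
  have h3 : ρ i = T i := by
    have := Equiv.congr_fun h2 (T i)
    simpa [ρ'] using this
  rw [← hρ, h3]
  rfl

/-- By Galois theory, `y i` lies in the image of `i` because it is fixed by the automorphisms fixing
that image, and it generates the image because the stabilizer of `y i` is no larger. -/
lemma generator_of_compat {k E Ω : Type*} [Field k] [Field E] [Field Ω] [Algebra k E] [Algebra k Ω]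
    [IsGalois k Ω] (y : (E →ₐ[k] Ω) → Ω) (hyi : Function.Injective y)
    (hτ : ∀ (τ : Ω ≃ₐ[k] Ω) i, τ (y i) = y ((τ : Ω →ₐ[k] Ω).comp i)) (i : E →ₐ[k] Ω) :
    ∃ ζ : E, i ζ = y i ∧ k⟮ζ⟯ = ⊤ := by
  have h1 : y i ∈ i.fieldRange := by
    rw [← InfiniteGalois.fixedField_fixingSubgroup i.fieldRange]
    rintro ⟨τ, hτi⟩
    change τ (y i) = y i
    rw [hτ]
    congr 1
    ext e
    exact hτi ⟨i e, e, rfl⟩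
  obtain ⟨ζ, hζ⟩ := h1
  change i ζ = y i at hζ
  refine ⟨ζ, hζ, ?_⟩
  rw [← top_le_iff]
  intro e _
  have h2 : i e ∈ k⟮i ζ⟯ := by
    rw [← InfiniteGalois.fixedField_fixingSubgroup k⟮i ζ⟯]
    rintro ⟨τ, hτi⟩
    change τ (i e) = i e
    have h3 : τ (i ζ) = i ζ := hτi ⟨i ζ, mem_adjoin_simple_self k _⟩
    rw [hζ, hτ] at h3
    exact DFunLike.congr_fun (hyi h3) e
  have h4 : k⟮i ζ⟯ = k⟮ζ⟯.map i := by rw [adjoin_map, Set.image_singleton]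
  rw [h4] at h2
  obtain ⟨e', he', hee⟩ := h2
  rwa [← i.injective hee]

/-- Every separable extension `E` of degree `m + l` of a PAC field `k` is generated by a root of some
`X ^ m * (X - 1) ^ l - t` with `t ∈ k`. -/
theorem exists_root_generator {k E : Type*} [Field k] [Field E] [Algebra k E]
    [FiniteDimensional k E] [Algebra.IsSeparable k E] (hPAC : IsPAC k) {m l : ℕ} (hm : 0 < m)
    (hl : 0 < l) (hml : m.Coprime l) (hm0 : (m : k) ≠ 0) (hl0 : (l : k) ≠ 0)
    (hn : ((m + l : ℕ) : k) ≠ 0) (hdeg : Module.finrank k E = m + l) :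
    ∃ (t : k) (ζ : E), ζ ^ m * (ζ - 1) ^ l = algebraMap k E t ∧ k⟮ζ⟯ = ⊤ := by
  classical
  have := hPAC.infinite
  let K := AlgebraicClosure k
  let Ω := SeparableClosure k
  let θ₀ : Ω →ₐ[k] K := IsScalarTower.toAlgHom k Ω K
  have hcast (a : ℕ) (ha : (a : k) ≠ 0) : (a : K) ≠ 0 := fun h => ha <| by
    apply (algebraMap k K).injective
    rw [map_natCast, h, map_zero]
  have hcard : Fintype.card (E →ₐ[k] Ω) = m + l := by
    rw [← hdeg]
    exact AlgHom.card_of_splits k E Ω fun x =>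
      IsSepClosed.splits_codomain _ (Algebra.IsSeparable.isSeparable k x)
  obtain ⟨c, P, hmon, hirr, ⟨D, hD, hDP⟩, hP⟩ := exists_good_resolvent (E := E) θ₀ hm hl hml
    (hcast m hm0) (hcast l hl0) (hcast _ hn) hcard
  obtain ⟨t, x, ht, hx⟩ := hPAC.exists_point P hmon hirr D hD
  have hsep := hDP t ht
  set h := (fam k m l).map (evalRingHom t) with hh
  have hhm : h.Monic := (fam_monic hm l).map _
  have hhd : h.natDegree = Fintype.card (E →ₐ[k] Ω) := by
    rw [hh, (fam_monic hm l).natDegree_map, fam_natDegree, hcard]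
  -- the fibre over `t` is separable, so that its roots lie in `Ω`
  have hhs : h.Separable := by
    obtain ⟨z, hz⟩ := exists_eq_prod_of_splits (ι := E →ₐ[k] Ω) (h.map (algebraMap k K))
      (hhm.map _) (IsAlgClosed.splits _) (by rw [natDegree_map, hhd])
    have h1 := hP K θ₀ ((algebraMap k K).comp (evalRingHom t)) z
      (by ext; simp) (by rw [← Polynomial.map_map]; exact hz)
    rw [← Polynomial.map_map] at h1
    have h2 := (injective_of_lagr_separable _ z (h1 ▸ hsep.map)).2
    rw [← separable_map (algebraMap k K), hz, separable_prod_X_sub_C_iff]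
    exact h2
  obtain ⟨z, hz⟩ := exists_eq_prod_of_splits (ι := E →ₐ[k] Ω) (h.map (algebraMap k Ω))
      (hhm.map _) (IsSepClosed.splits_codomain _ hhs) (by rw [natDegree_map, hhd])
  have h1 := hP Ω (RingHom.id Ω) ((algebraMap k Ω).comp (evalRingHom t)) z
      (by ext; simp) (by rw [← Polynomial.map_map]; exact hz)
  rw [← Polynomial.map_map] at h1
  obtain ⟨hinj, hzi⟩ := injective_of_lagr_separable _ z (h1 ▸ hsep.map)
  simp only [RingHom.id_apply] at h1 hinj
  obtain ⟨π, hπ⟩ : ∃ π : Equiv.Perm (E →ₐ[k] Ω), algebraMap k Ω x = ∑ i, i c * z (π i) := by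
    have h2 := congrArg (eval (algebraMap k Ω x)) h1
    rw [eval_map_apply, hx, map_zero, lagr, eval_prod, eq_comm, Finset.prod_eq_zero_iff] at h2
    obtain ⟨π, -, hπ⟩ := h2
    rw [eval_sub, eval_X, eval_C, sub_eq_zero] at hπ
    exact ⟨π, hπ⟩
  let y : (E →ₐ[k] Ω) → Ω := fun i => z (π i)
  have hyi : Function.Injective y := hzi.comp π.injective
  have hy : h.map (algebraMap k Ω) = ∏ i, (X - C (y i)) := by
    rw [hz]
    exact (Fintype.prod_equiv π _ _ fun i => rfl).symm
  have hτ := galois_compat h c x y hy hyi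
    (fun ρ ρ' hρ => by
      have := hinj (a₁ := π * ρ) (a₂ := π * ρ') hρ
      exact mul_left_cancel this) hπ
  obtain ⟨i⟩ : Nonempty (E →ₐ[k] Ω) := Fintype.card_pos_iff.1 (by omega)
  obtain ⟨ζ, hζ, htop⟩ := generator_of_compat y hyi hτ i
  refine ⟨t, ζ, ?_, htop⟩
  apply i.injective
  have h3 : (h.map (algebraMap k Ω)).eval (y i) = 0 := by
    rw [hy, eval_prod]
    exact Finset.prod_eq_zero (Finset.mem_univ i) (by simp)
  rw [hh, Polynomial.map_map, fam_root_iff] at h3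
  change i _ = i _
  rw [map_mul, map_pow, map_pow, map_sub, map_one, hζ, h3]
  simp

/-! ### Passage to the trinomial -/

/-- An extension whose degree is invertible in the base field is separable. -/
lemma isSeparable_of_finrank_ne_zero {k E : Type*} [Field k] [Field E] [Algebra k E]
    [FiniteDimensional k E] (h : (Module.finrank k E : k) ≠ 0) : Algebra.IsSeparable k E := by
  refine ⟨fun x => ?_⟩
  have h_int : IsIntegral k x := Algebra.IsIntegral.isIntegral x
  refine (separable_iff_derivative_ne_zero (minpoly.irreducible h_int)).2 fun h0 => h ?_
  obtain ⟨q, hq⟩ := minpoly.degree_dvd (K := k) h_int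
  have hpos := minpoly.natDegree_pos h_int
  have h1 := congrArg (fun p => coeff p ((minpoly k x).natDegree - 1)) h0
  simp only [coeff_derivative, coeff_zero] at h1
  rw [Nat.sub_add_cancel hpos, (minpoly.monic h_int).coeff_natDegree, one_mul,
    ← Nat.cast_succ, Nat.succ_eq_add_one, Nat.sub_add_cancel hpos] at h1
  rw [hq, Nat.cast_mul, h1, zero_mul]

/-- `y = ζ ^ (s - r) * (1 - ζ) ^ r` turns `ζ ^ m * (1 - ζ) ^ l = t` into the trinomial equation. -/
lemma trinomial_identity {R : Type*} [CommRing R] {m l r d : ℕ} (hid : (d + r) * l = r * (m + l) + 1)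
    (ζ : R) :
    (ζ ^ d * (1 - ζ) ^ r) ^ (m + l) - (ζ ^ m * (1 - ζ) ^ l) ^ r * (ζ ^ d * (1 - ζ) ^ r) ^ m +
      (ζ ^ m * (1 - ζ) ^ l) ^ (d + r) = 0 ∧
    (ζ ^ d * (1 - ζ) ^ r) ^ l = (ζ ^ m * (1 - ζ) ^ l) ^ r * ζ := by
  have h1 : d * l = m * r + 1 := by nlinarith
  have h2 : d * (m + l) = m * (d + r) + 1 := by nlinarith
  have h3 : l * (d + r) = r * (m + l) + 1 := by nlinarith
  constructor
  · simp only [mul_pow, ← pow_mul]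
    rw [h2, h3]
    ring
  · simp only [mul_pow, ← pow_mul]
    rw [h1]
    ring

theorem stmt_17 (n m r s : ℕ) (hm : 1 ≤ m) (hmn : m < n)
    (hr : 0 < r) (hs : 0 < s)
    (hcop : Nat.Coprime m n)
    (hid : (s : ℤ) * (n - m) - r * n = 1)
    (k E : Type*) [Field k] [Field E] [Algebra k E]
    (hPAC : IsPAC k)
    (hchar : IsUnit ((m * n * (n - m) : ℕ) : k))
    (hdeg : Module.finrank k E = n) :
    ∃ t : k, Irreducible (X ^ n - C (t ^ r) * X ^ m + C (t ^ s)) ∧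
      ∃ x : E, Polynomial.aeval x (X ^ n - C (t ^ r) * X ^ m + C (t ^ s)) = 0 ∧
        IntermediateField.adjoin k {x} = ⊤ := by
  obtain ⟨l, rfl⟩ : ∃ l, n = m + l := ⟨n - m, by omega⟩
  have hl : 0 < l := by omega
  have hid' : s * l = r * (m + l) + 1 := by
    push_cast at hid
    zify
    linarith
  obtain ⟨d, rfl⟩ : ∃ d, s = d + r := ⟨s - r, by
    have : r ≤ s := by
      by_contra! h
      nlinarith
    omega⟩
  rw [Nat.add_sub_cancel_left] at hchar
  have hchar0 := hchar.ne_zero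
  push_cast at hchar0
  have hl0 : (l : k) ≠ 0 := right_ne_zero_of_mul hchar0
  have hm0 : (m : k) ≠ 0 := left_ne_zero_of_mul (left_ne_zero_of_mul hchar0)
  have hn0 : ((m + l : ℕ) : k) ≠ 0 := by
    push_cast
    exact right_ne_zero_of_mul (left_ne_zero_of_mul hchar0)
  have : FiniteDimensional k E := Module.finite_of_finrank_pos (by omega)
  have : Algebra.IsSeparable k E := isSeparable_of_finrank_ne_zero (by rwa [hdeg])
  obtain ⟨t', ζ, hζ, htop⟩ := exists_root_generator (E := E) hPAC hm hl
    (Nat.coprime_self_add_right.1 hcop) hm0 hl0 hn0 hdeg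
  have hnot (a : k) : ζ ≠ algebraMap k E a := by
    rintro rfl
    have h1 : k⟮algebraMap k E a⟯ = ⊥ := adjoin_simple_eq_bot_iff.2 (IntermediateField.algebraMap_mem _ a)
    have h2 := IntermediateField.finrank_bot (F := k) (E := E)
    rw [← h1, htop, IntermediateField.finrank_top', hdeg] at h2
    omega
  have hζ0 : ζ ≠ 0 := by simpa using hnot 0
  have hζ1 : 1 - ζ ≠ 0 := sub_ne_zero.2 fun h => hnot 1 (by rw [map_one, h])
  -- passing from `ζ - 1` to `1 - ζ`
  have ht : ζ ^ m * (1 - ζ) ^ l = algebraMap k E ((-1) ^ l * t') := by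
    rw [map_mul, ← hζ, ← neg_sub ζ 1, neg_pow]
    simp only [map_pow, map_neg, map_one]
    ring
  obtain ⟨h1, h2⟩ := trinomial_identity hid' ζ
  set y := ζ ^ d * (1 - ζ) ^ r with hy
  set t := (-1) ^ l * t' with ht'
  have hroot : aeval y (X ^ (m + l) - C (t ^ r) * X ^ m + C (t ^ (d + r))) = 0 := by
    rw [ht] at h1
    simpa using h1
  have hadj : k⟮y⟯ = ⊤ := by
    rw [← top_le_iff, ← htop, adjoin_simple_le_iff]
    have ht0 : (algebraMap k E t) ^ r ≠ 0 := by
      rw [← ht]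
      exact pow_ne_zero _ (mul_ne_zero (pow_ne_zero _ hζ0) (pow_ne_zero _ hζ1))
    rw [ht] at h2
    rw [← mul_div_cancel_left₀ ζ ht0, ← h2]
    exact div_mem (pow_mem (mem_adjoin_simple_self k y) _) (pow_mem (IntermediateField.algebraMap_mem _ t) _)
  refine ⟨t, ?_, y, hroot, hadj⟩
  have h_int : IsIntegral k y := Algebra.IsIntegral.isIntegral y
  have hmin : (minpoly k y).natDegree = m + l := by
    rw [← IntermediateField.adjoin.finrank h_int, hadj, IntermediateField.finrank_top', hdeg]
  have hlow : (-(C (t ^ r) * X ^ m) + C (t ^ (d + r))).degree < ((m + l : ℕ) : WithBot ℕ) := by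
    refine (degree_add_le _ _).trans_lt (max_lt ?_ ?_)
    · rw [degree_neg]
      exact (degree_C_mul_X_pow_le _ _).trans_lt (by exact_mod_cast hmn)
    · exact degree_C_le.trans_lt (by exact_mod_cast (by omega : 0 < m + l))
  have hform : X ^ (m + l) - C (t ^ r) * X ^ m + C (t ^ (d + r)) =
      X ^ (m + l) + (-(C (t ^ r) * X ^ m) + C (t ^ (d + r))) := by ring
  rw [hform] at hroot ⊢
  rw [eq_of_monic_of_dvd_of_natDegree_le (minpoly.monic h_int) (monic_X_pow_add hlow)
    (minpoly.dvd k y hroot) (by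
      rw [hmin, natDegree_add_eq_left_of_degree_lt (by rwa [degree_X_pow]), natDegree_X_pow])]
  exact minpoly.irreducible h_int
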